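/- arXiv:2511.02974 — 2 statements merged into one kernel-verified Lean document; each statement's English description precedes it below -/
import Mathlib

section
/- There is an absolute constant C > 1 with the following property. Let f : ℝ^n → [0,∞) be a geometric log-concave integrable function (n ≥ 2). Then for every 1 ≤ k ≤ n−1 and every k-dimensional linear subspace H of ℝ^n, (∫_H Δ_out f(x) dx)^{1/k} ≤ C·(n/k)²·(log n)^3 · (∫_H Δ_in f(x) dx)^{1/k}, where the integrals are with respect to k-dimensional Lebesgue measure on H. -/
open MeasureTheory Metric Set
open scoped ENNReal RealInnerProductSpace Pointwise

noncomputable section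

/-- `f` is a geometric log-concave integrable function: nonnegative, log-concave, centered,
attaining its maximum at the origin, with positive finite integral. -/
structure IsGeomLogConcave {n : ℕ} (f : EuclideanSpace ℝ (Fin n) → ℝ) : Prop where
  nonneg : ∀ x, 0 ≤ f x
  logConcave : ∀ x y : EuclideanSpace ℝ (Fin n), ∀ a b : ℝ, 0 ≤ a → 0 ≤ b → a + b = 1 →
    f x ^ a * f y ^ b ≤ f (a • x + b • y)
  centered : (∫ x, f x • x) = (0 : EuclideanSpace ℝ (Fin n))
  maxAtZero : ∀ x, f x ≤ f 0
  integrable : Integrable f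
  integral_pos : 0 < ∫ x, f x

/-- `Δ_out f (x) = sup { √(f x₁ · f (−x₂)) : x = (x₁ + x₂)/2 }`. -/
def deltaOut {n : ℕ} (f : EuclideanSpace ℝ (Fin n) → ℝ) (x : EuclideanSpace ℝ (Fin n)) : ℝ :=
  sSup {t : ℝ | ∃ x₁ x₂, x = (2⁻¹ : ℝ) • (x₁ + x₂) ∧ t = Real.sqrt (f x₁ * f (-x₂))}

/-- `Δ_in f (x) = min (f x) (f (−x))`. -/
def deltaIn {n : ℕ} (f : EuclideanSpace ℝ (Fin n) → ℝ) (x : EuclideanSpace ℝ (Fin n)) : ℝ :=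
  min (f x) (f (-x))

/-!
After dividing by `f 0` and passing to the interior of the support, `Δ_out f` on `H` is bounded by
the correlation `y ↦ sup_a g(a) g(a - y)`, and `Δ_in f` dominates `g(x) g(-x)`. Both are read off
from the centered log-concave function `F = g ⊗ g` on `V × V` and the antidiagonal copy of `H`: the
second is the central section of `F`, the first is the correlation of `√F` along that copy.

Split `V × V = Z × X` with `X` the copy of `H`. Log-concavity bounds the integral over `X` of the
correlation of `√F` by the squared fibre integrals of `√F`, and Prékopa–Leindler in the base `Z`
bounds these by `(∫ F)² / ∫ P`, where `P(z)` is the supremum of `F` over the fibre at `z`. It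
remains to bound `∫ F / ∫ P` by the central fibre. Write `m = dim (Z × X)`, `k = dim X` and
`h(z) = ∫ F(z, x) ^ β dx`. Since `∫ F (-log F) ≤ 2 m ∫ F` and `h` is log-concave, Jensen's
inequality for `log h`, under the density `F`, bounds `h` from below at the barycenter `z = 0` up to
a factor `e ^ (2 β m)`, while replacing `F ^ β` by `F` on the central fibre costs `β ^ k`. The
choice `β = k / m` makes the total loss of order `(m / k) ^ (2 k)`.
-/

/-! ### The Prékopa–Leindler inequality -/

-- `K + L` contains the translates `K + min L` and `max K + L`, which share only one point.
theorem volume_add_volume_le_volume_add_of_isCompact {K L : Set ℝ} (hK : IsCompact K)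
    (hL : IsCompact L) (hK₀ : K.Nonempty) (hL₀ : L.Nonempty) :
    volume K + volume L ≤ volume (K + L) := by
  have hsup : sSup K ∈ K := hK.sSup_mem hK₀
  have hinf : sInf L ∈ L := hL.sInf_mem hL₀
  have hdisj : AEDisjoint volume ((· + sInf L) '' K) ((sSup K + ·) '' L) := by
    refine measure_mono_null (t := {sSup K + sInf L}) ?_ (by simp)
    rintro _ ⟨⟨x, hx, rfl⟩, y, hy, hxy⟩
    have hx' : x ≤ sSup K := le_csSup hK.bddAbove hx
    have hy' : sInf L ≤ y := csInf_le hL.bddBelow hy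
    simp only [mem_singleton_iff] at hxy ⊢
    linarith
  have hmeas : NullMeasurableSet ((sSup K + ·) '' L) volume :=
    (hL.image (by fun_prop)).measurableSet.nullMeasurableSet
  calc volume K + volume L
      = volume ((· + sInf L) '' K) + volume ((sSup K + ·) '' L) := by simp
    _ = volume ((· + sInf L) '' K ∪ (sSup K + ·) '' L) := (measure_union₀ hmeas hdisj).symm
    _ ≤ volume (K + L) := by
      refine measure_mono (union_subset ?_ ?_)
      · exact image_subset_iff.2 fun x hx => add_mem_add hx hinf
      · exact image_subset_iff.2 fun y hy => add_mem_add hsup hy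

theorem measure_add_le_of_forall_isCompact {α : Type*} [TopologicalSpace α] [MeasurableSpace α]
    {μ : Measure α} [μ.InnerRegular] {A : Set α} (hA : MeasurableSet A) (hA₀ : A.Nonempty)
    {c d : ℝ≥0∞} (h : ∀ K ⊆ A, IsCompact K → K.Nonempty → μ K + c ≤ d) : μ A + c ≤ d := by
  obtain ⟨x, hx⟩ := hA₀
  have hcd : c ≤ d := le_add_self.trans
    (h {x} (singleton_subset_iff.2 hx) isCompact_singleton (singleton_nonempty x))
  rcases eq_or_ne c ∞ with rfl | hc
  · simp [top_le_iff.1 hcd]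
  refine add_le_of_le_tsub_right_of_le hcd ?_
  rw [hA.measure_eq_iSup_isCompact]
  refine iSup_le fun K => iSup_le fun hKA => iSup_le fun hK => ?_
  exact (measure_mono (subset_insert x K)).trans (ENNReal.le_sub_of_add_le_right hc
    (h _ (insert_subset hx hKA) (hK.insert x) (insert_nonempty x K)))

theorem volume_add_volume_le_volume_add {A B : Set ℝ} (hA : MeasurableSet A)
    (hB : MeasurableSet B) (hA₀ : A.Nonempty) (hB₀ : B.Nonempty) :
    volume A + volume B ≤ volume (A + B) := by
  refine measure_add_le_of_forall_isCompact hA hA₀ fun K hKA hK hK₀ => ?_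
  rw [add_comm]
  refine measure_add_le_of_forall_isCompact hB hB₀ fun L hLB hL hL₀ => ?_
  rw [add_comm]
  exact (volume_add_volume_le_volume_add_of_isCompact hK hL hK₀ hL₀).trans
    (measure_mono (add_subset_add hKA hLB))

theorem lintegral_eq_lintegral_meas_ofReal_lt {α : Type*} [MeasurableSpace α] (μ : Measure α)
    {f : α → ℝ≥0∞} (hf : Measurable f) (hf_top : ∀ x, f x ≠ ∞) :
    ∫⁻ x, f x ∂μ = ∫⁻ t in Ioi (0 : ℝ), μ {x | ENNReal.ofReal t < f x} := by
  have hlayer := lintegral_eq_lintegral_meas_lt μ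
    (.of_forall fun x => ENNReal.toReal_nonneg) hf.ennreal_toReal.aemeasurable
  simp only [ENNReal.ofReal_toReal (hf_top _)] at hlayer
  rw [hlayer]
  refine setLIntegral_congr_fun measurableSet_Ioi fun t ht => ?_
  simp only [ENNReal.ofReal_lt_iff_lt_toReal (le_of_lt ht) (hf_top _)]

theorem ennreal_geom_mean_le_arith_mean2_weighted {a b : ℝ} (ha : 0 < a) (hb : 0 < b)
    (hab : a + b = 1) (u v : ℝ≥0∞) :
    u ^ a * v ^ b ≤ ENNReal.ofReal a * u + ENNReal.ofReal b * v := by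
  have hconj : a⁻¹.HolderConjugate b⁻¹ := by
    rw [Real.holderConjugate_iff]
    exact ⟨(one_lt_inv₀ ha).2 (by linarith), by simpa using hab⟩
  have hyoung := ENNReal.young_inequality (u ^ a) (v ^ b) hconj
  rwa [← ENNReal.rpow_mul, ← ENNReal.rpow_mul, mul_inv_cancel₀ ha.ne', mul_inv_cancel₀ hb.ne',
    ENNReal.rpow_one, ENNReal.rpow_one, ENNReal.ofReal_inv_of_pos ha,
    ENNReal.ofReal_inv_of_pos hb, ENNReal.div_eq_inv_mul, ENNReal.div_eq_inv_mul, inv_inv,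
    inv_inv] at hyoung

section Real

variable {a b : ℝ} {f g h : ℝ → ℝ≥0∞}

theorem volume_superlevel_add_le (ha : 0 < a) (hb : 0 < b) (hab : a + b = 1)
    (hf : Measurable f) (hg : Measurable g)
    (hfgh : ∀ x y, f x ^ a * g y ^ b ≤ h (a • x + b • y)) {s : ℝ≥0∞}
    (hfs : s < ⨆ x, f x) (hgs : s < ⨆ x, g x) :
    ENNReal.ofReal a * volume {x | s < f x} + ENNReal.ofReal b * volume {x | s < g x} ≤
      volume {x | s < h x} := by
  have hadd := volume_add_volume_le_volume_add
    ((measurableSet_lt measurable_const hf).const_smul₀ a)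
    ((measurableSet_lt measurable_const hg).const_smul₀ b)
    (Set.Nonempty.smul_set (lt_iSup_iff.1 hfs)) (Set.Nonempty.smul_set (lt_iSup_iff.1 hgs))
  rw [Measure.addHaar_smul, Measure.addHaar_smul, Module.finrank_self, pow_one, pow_one,
    abs_of_pos ha, abs_of_pos hb] at hadd
  refine hadd.trans (measure_mono ?_)
  rintro _ ⟨_, ⟨x, hx, rfl⟩, _, ⟨y, hy, rfl⟩, rfl⟩
  calc s = s ^ a * s ^ b := by
        rw [← ENNReal.rpow_add_of_nonneg _ _ ha.le hb.le, hab, ENNReal.rpow_one]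
    _ < f x ^ a * g y ^ b :=
        ENNReal.mul_lt_mul (ENNReal.rpow_lt_rpow hx ha) (ENNReal.rpow_lt_rpow hy hb)
    _ ≤ h (a • x + b • y) := hfgh x y

theorem lintegral_add_lintegral_le_of_iSup_eq_one (ha : 0 < a) (hb : 0 < b) (hab : a + b = 1)
    (hf : Measurable f) (hg : Measurable g) (hh : Measurable h)
    (hf_sup : ⨆ x, f x = 1) (hg_sup : ⨆ x, g x = 1)
    (hfgh : ∀ x y, f x ^ a * g y ^ b ≤ h (a • x + b • y)) :
    ENNReal.ofReal a * (∫⁻ x, f x) + ENNReal.ofReal b * (∫⁻ x, g x) ≤ ∫⁻ x, h x := by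
  have hf_le : ∀ x, f x ≤ 1 := fun x => hf_sup ▸ le_iSup f x
  have hg_le : ∀ x, g x ≤ 1 := fun x => hg_sup ▸ le_iSup g x
  have hfgh_min : ∀ x y, f x ^ a * g y ^ b ≤ min (h (a • x + b • y)) 1 := fun x y =>
    le_min (hfgh x y)
      (mul_le_one' (ENNReal.rpow_le_one (hf_le x) ha.le) (ENNReal.rpow_le_one (hg_le y) hb.le))
  refine le_trans ?_ (lintegral_mono fun x => min_le_left (h x) 1)
  have hanti : ∀ u : ℝ → ℝ≥0∞, Antitone fun t => volume {x | ENNReal.ofReal t < u x} :=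
    fun u s t hst => measure_mono fun x hx => (ENNReal.ofReal_le_ofReal hst).trans_lt hx
  have hne_top : ∀ {c : ℝ≥0∞}, c ≤ 1 → c ≠ ∞ := fun hc => ne_top_of_le_ne_top ENNReal.one_ne_top hc
  rw [lintegral_eq_lintegral_meas_ofReal_lt _ hf fun x => hne_top (hf_le x),
    lintegral_eq_lintegral_meas_ofReal_lt _ hg fun x => hne_top (hg_le x),
    lintegral_eq_lintegral_meas_ofReal_lt _ (hh.min measurable_const)
      fun x => hne_top (min_le_right _ _),
    ← lintegral_const_mul _ (hanti f).measurable, ← lintegral_const_mul _ (hanti g).measurable,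
    ← lintegral_add_left ((hanti f).measurable.const_mul _)]
  refine lintegral_mono fun t => ?_
  rcases lt_or_ge (ENNReal.ofReal t) 1 with ht | ht
  · exact volume_superlevel_add_le ha hb hab hf hg hfgh_min (hf_sup ▸ ht) (hg_sup ▸ ht)
  · simp [(hf_le _).trans ht |>.not_gt, (hg_le _).trans ht |>.not_gt]

theorem lintegral_rpow_mul_lintegral_rpow_le_of_iSup_ne_top (ha : 0 < a) (hb : 0 < b)
    (hab : a + b = 1) (hf : Measurable f) (hg : Measurable g) (hh : Measurable h)
    (hf_sup : ⨆ x, f x ≠ ∞) (hg_sup : ⨆ x, g x ≠ ∞)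
    (hfgh : ∀ x y, f x ^ a * g y ^ b ≤ h (a • x + b • y)) :
    (∫⁻ x, f x) ^ a * (∫⁻ x, g x) ^ b ≤ ∫⁻ x, h x := by
  set M := ⨆ x, f x
  set N := ⨆ x, g x
  rcases eq_or_ne M 0 with hM | hM
  · simp [ENNReal.iSup_eq_zero.1 hM, ENNReal.zero_rpow_of_pos ha]
  rcases eq_or_ne N 0 with hN | hN
  · simp [ENNReal.iSup_eq_zero.1 hN, ENNReal.zero_rpow_of_pos hb]
  set P := M ^ a * N ^ b
  have hP : P ≠ 0 := mul_ne_zero (by simp [hM, hf_sup]) (by simp [hN, hg_sup])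
  have hP_top : P ≠ ∞ := ENNReal.mul_ne_top (ENNReal.rpow_ne_top_of_nonneg ha.le hf_sup)
    (ENNReal.rpow_ne_top_of_nonneg hb.le hg_sup)
  have hdiv : ∀ u v : ℝ≥0∞, (M⁻¹ * u) ^ a * (N⁻¹ * v) ^ b = P⁻¹ * (u ^ a * v ^ b) := by
    intro u v
    rw [ENNReal.mul_rpow_of_nonneg _ _ ha.le, ENNReal.mul_rpow_of_nonneg _ _ hb.le,
      ENNReal.inv_rpow, ENNReal.inv_rpow, mul_mul_mul_comm,
      ENNReal.mul_inv (Or.inl (by simp [hM, hf_sup])) (Or.inr (by simp [hN, hg_sup]))]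
  have hnormalized := lintegral_add_lintegral_le_of_iSup_eq_one (f := fun x => M⁻¹ * f x)
    (g := fun x => N⁻¹ * g x) (h := fun x => P⁻¹ * h x) ha hb hab (hf.const_mul _)
    (hg.const_mul _) (hh.const_mul _)
    (by rw [← ENNReal.mul_iSup, ENNReal.inv_mul_cancel hM hf_sup])
    (by rw [← ENNReal.mul_iSup, ENNReal.inv_mul_cancel hN hg_sup])
    (fun x y => by rw [hdiv]; gcongr; exact hfgh x y)
  rw [lintegral_const_mul _ hf, lintegral_const_mul _ hg, lintegral_const_mul _ hh] at hnormalized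
  have hscaled := (ennreal_geom_mean_le_arith_mean2_weighted ha hb hab _ _).trans hnormalized
  rwa [hdiv, ENNReal.mul_le_mul_iff_right (ENNReal.inv_ne_zero.2 hP_top)
    (ENNReal.inv_ne_top.2 hP)] at hscaled

end Real

/-- `μ` satisfies the Prékopa–Leindler inequality for all measurable extended
nonnegative functions and all positive weights. -/
def PrekopaLeindler {V : Type*} [Add V] [SMul ℝ V] [MeasurableSpace V] (μ : Measure V) : Prop :=
  ∀ ⦃a b : ℝ⦄, 0 < a → 0 < b → a + b = 1 → ∀ ⦃f g h : V → ℝ≥0∞⦄,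
    Measurable f → Measurable g → Measurable h →
    (∀ x y, f x ^ a * g y ^ b ≤ h (a • x + b • y)) →
    (∫⁻ x, f x ∂μ) ^ a * (∫⁻ x, g x ∂μ) ^ b ≤ ∫⁻ x, h x ∂μ

theorem tendsto_lintegral_min_natCast {α : Type*} [MeasurableSpace α] (μ : Measure α)
    {f : α → ℝ≥0∞} (hf : Measurable f) :
    Filter.Tendsto (fun j : ℕ => ∫⁻ x, min (f x) j ∂μ) Filter.atTop (nhds (∫⁻ x, f x ∂μ)) := by
  refine lintegral_tendsto_of_tendsto_of_monotone (fun j => by fun_prop)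
    (.of_forall fun x i j hij => min_le_min le_rfl (by exact_mod_cast hij))
    (.of_forall fun x => ?_)
  simpa using (tendsto_const_nhds (x := f x)).min ENNReal.tendsto_nat_nhds_top

theorem prekopaLeindler_real : PrekopaLeindler (volume : Measure ℝ) := by
  intro a b ha hb hab f g h hf hg hh hfgh
  rcases eq_or_ne (∫⁻ x, f x) 0 with hf₀ | hf₀
  · simp [hf₀, ENNReal.zero_rpow_of_pos ha]
  rcases eq_or_ne (∫⁻ x, g x) 0 with hg₀ | hg₀
  · simp [hg₀, ENNReal.zero_rpow_of_pos hb]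
  have hf_lim := (tendsto_lintegral_min_natCast volume hf).ennrpow_const a
  have hg_lim := (tendsto_lintegral_min_natCast volume hg).ennrpow_const b
  have hsup : ∀ (u : ℝ → ℝ≥0∞) (j : ℕ), ⨆ x, min (u x) (j : ℝ≥0∞) ≠ ∞ := fun u j =>
    ne_top_of_le_ne_top (ENNReal.natCast_ne_top j) (iSup_le fun x => min_le_right _ _)
  refine le_of_tendsto (ENNReal.Tendsto.mul hf_lim (Or.inl (by simp [hf₀, ha.le, ha])) hg_lim
    (Or.inl (by simp [hg₀, hb.le, hb]))) (.of_forall fun j => ?_)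
  refine lintegral_rpow_mul_lintegral_rpow_le_of_iSup_ne_top ha hb hab (by fun_prop)
    (by fun_prop) hh (hsup f j) (hsup g j) fun x y => le_trans ?_ (hfgh x y)
  gcongr <;> exact min_le_left _ _

namespace PrekopaLeindler

section Module

variable {V W : Type*} [AddCommGroup V] [Module ℝ V] [MeasurableSpace V]
  [AddCommGroup W] [Module ℝ W] [MeasurableSpace W] {μ : Measure V} {ν : Measure W}

theorem prod [SFinite ν] (hμ : PrekopaLeindler μ) (hν : PrekopaLeindler ν) :
    PrekopaLeindler (μ.prod ν) := by
  intro a b ha hb hab f g h hf hg hh hfgh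
  rw [lintegral_prod _ hf.aemeasurable, lintegral_prod _ hg.aemeasurable,
    lintegral_prod _ hh.aemeasurable]
  refine hμ ha hb hab hf.lintegral_prod_right' hg.lintegral_prod_right'
    hh.lintegral_prod_right' fun x y => ?_
  exact hν ha hb hab (by fun_prop) (by fun_prop) (by fun_prop) fun x' y' => hfgh (x, x') (y, y')

theorem map (hμ : PrekopaLeindler μ) (e : V →ₗ[ℝ] W) (he : Measurable e) :
    PrekopaLeindler (μ.map e) := by
  intro a b ha hb hab f g h hf hg hh hfgh
  rw [lintegral_map hf he, lintegral_map hg he, lintegral_map hh he]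
  refine hμ ha hb hab (hf.comp he) (hg.comp he) (hh.comp he) fun x y => ?_
  simpa using hfgh (e x) (e y)

theorem smul (hμ : PrekopaLeindler μ) (c : ℝ≥0∞) : PrekopaLeindler (c • μ) := by
  intro a b ha hb hab f g h hf hg hh hfgh
  have hc : c ^ a * c ^ b = c := by
    rw [← ENNReal.rpow_add_of_nonneg _ _ ha.le hb.le, hab, ENNReal.rpow_one]
  simp only [lintegral_smul_measure, smul_eq_mul]
  calc (c * ∫⁻ x, f x ∂μ) ^ a * (c * ∫⁻ x, g x ∂μ) ^ b
      = c ^ a * c ^ b * ((∫⁻ x, f x ∂μ) ^ a * (∫⁻ x, g x ∂μ) ^ b) := by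
        rw [ENNReal.mul_rpow_of_nonneg _ _ ha.le, ENNReal.mul_rpow_of_nonneg _ _ hb.le,
          mul_mul_mul_comm]
    _ ≤ c * ∫⁻ x, h x ∂μ := by
        rw [hc]
        gcongr
        exact hμ ha hb hab hf hg hh hfgh

end Module

variable {V W : Type*} [NormedAddCommGroup V] [NormedSpace ℝ V] [FiniteDimensional ℝ V]
  [MeasurableSpace V] [BorelSpace V] [NormedAddCommGroup W] [NormedSpace ℝ W]
  [FiniteDimensional ℝ W] [MeasurableSpace W] [BorelSpace W]

theorem of_finrank_eq {μ : Measure V} [μ.IsAddHaarMeasure] (hμ : PrekopaLeindler μ)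
    (h : Module.finrank ℝ V = Module.finrank ℝ W) (ν : Measure W) [ν.IsAddHaarMeasure] :
    PrekopaLeindler ν := by
  let e : V ≃L[ℝ] W := ContinuousLinearEquiv.ofFinrankEq h
  have hmap : (μ.map e).IsAddHaarMeasure := inferInstance
  rw [Measure.isAddLeftInvariant_eq_smul ν (μ.map e)]
  exact (hμ.map e.toLinearEquiv.toLinearMap e.continuous.measurable).smul _

end PrekopaLeindler

theorem prekopaLeindler_pi : ∀ n : ℕ, PrekopaLeindler (volume : Measure (Fin n → ℝ))
  | 0 => by
    intro a b _ _ _ f g h _ _ _ hfgh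
    simpa [Measure.volume_pi_eq_dirac (0 : Fin 0 → ℝ)] using hfgh 0 0
  | n + 1 => (prekopaLeindler_real.prod (prekopaLeindler_pi n)).of_finrank_eq
      (by simp [add_comm]) volume

theorem prekopaLeindler_addHaar {V : Type*} [NormedAddCommGroup V] [NormedSpace ℝ V]
    [FiniteDimensional ℝ V] [MeasurableSpace V] [BorelSpace V] (μ : Measure V)
    [μ.IsAddHaarMeasure] : PrekopaLeindler μ :=
  (prekopaLeindler_pi (Module.finrank ℝ V)).of_finrank_eq (by simp) μ

/-! ### Normalized log-concave functions -/

/-- Log-concavity in multiplicative form, which allows the value `0`. It is used for functions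
with values in `ℝ` and in `ℝ≥0∞`; over `ℝ` it is meaningful for nonnegative functions only. -/
def IsLogConcave {V R : Type*} [Add V] [SMul ℝ V] [Mul R] [LE R] [Pow R ℝ] (f : V → R) : Prop :=
  ∀ x y : V, ∀ a b : ℝ, 0 ≤ a → 0 ≤ b → a + b = 1 → f x ^ a * f y ^ b ≤ f (a • x + b • y)

theorem IsLogConcave.comp_linearMap {V W R : Type*} [AddCommMonoid V] [Module ℝ V]
    [AddCommMonoid W] [Module ℝ W] [Mul R] [LE R] [Pow R ℝ] {f : V → R} (hf : IsLogConcave f)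
    (L : W →ₗ[ℝ] V) : IsLogConcave fun x => f (L x) := by
  intro x y a b ha hb hab
  simpa only [map_add, map_smul] using hf (L x) (L y) a b ha hb hab

theorem le_rpow_of_le_one {u : ℝ≥0∞} (hu : u ≤ 1) {t : ℝ} (ht : t ≤ 1) : u ≤ u ^ t := by
  simpa using ENNReal.rpow_le_rpow_of_exponent_ge hu ht

theorem ennreal_rpow_half_sq (u : ℝ≥0∞) : (u ^ (1 / 2 : ℝ)) ^ 2 = u := by
  rw [← ENNReal.rpow_mul_natCast]
  norm_num

section ENNRealValued

variable {V : Type*} [Add V] [SMul ℝ V] {f g : V → ℝ≥0∞}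

theorem IsLogConcave.mul (hf : IsLogConcave f) (hg : IsLogConcave g) :
    IsLogConcave fun x => f x * g x := by
  intro x y a b ha hb hab
  calc (f x * g x) ^ a * (f y * g y) ^ b = f x ^ a * f y ^ b * (g x ^ a * g y ^ b) := by
        rw [ENNReal.mul_rpow_of_nonneg _ _ ha, ENNReal.mul_rpow_of_nonneg _ _ hb,
          mul_mul_mul_comm]
    _ ≤ f (a • x + b • y) * g (a • x + b • y) :=
        mul_le_mul' (hf x y a b ha hb hab) (hg x y a b ha hb hab)

theorem IsLogConcave.rpow (hf : IsLogConcave f) {β : ℝ} (hβ : 0 ≤ β) :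
    IsLogConcave fun x => f x ^ β := by
  intro x y a b ha hb hab
  calc (f x ^ β) ^ a * (f y ^ β) ^ b = (f x ^ a * f y ^ b) ^ β := by
        rw [ENNReal.mul_rpow_of_nonneg _ _ hβ]
        simp only [← ENNReal.rpow_mul, mul_comm β]
    _ ≤ f (a • x + b • y) ^ β := ENNReal.rpow_le_rpow (hf x y a b ha hb hab) hβ

theorem IsLogConcave.mul_le_sq_midpoint (hf : IsLogConcave f) (x y : V) :
    f x * f y ≤ f ((1 / 2 : ℝ) • x + (1 / 2 : ℝ) • y) ^ 2 := by
  have hmid := pow_le_pow_left' (hf x y (1 / 2) (1 / 2) (by norm_num) (by norm_num) (by norm_num)) 2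
  rwa [mul_pow, ennreal_rpow_half_sq, ennreal_rpow_half_sq] at hmid

theorem IsLogConcave.mul_le_of_le_one (hf : IsLogConcave f) (hf_le : ∀ x, f x ≤ 1) (x y : V)
    {a b : ℝ} (ha : 0 ≤ a) (hb : 0 ≤ b) (hab : a + b = 1) : f x * f y ≤ f (a • x + b • y) :=
  (mul_le_mul' (le_rpow_of_le_one (hf_le x) (by linarith))
    (le_rpow_of_le_one (hf_le y) (by linarith))).trans (hf x y a b ha hb hab)

end ENNRealValued

/-- A log-concave function whose maximum, attained at the origin, is `1`. Lower semicontinuity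
makes it measurable together with all its fibrewise suprema. -/
structure IsNormalizedLogConcave {V : Type*} [AddCommGroup V] [Module ℝ V] [TopologicalSpace V]
    (F : V → ℝ≥0∞) : Prop where
  le_one : ∀ x, F x ≤ 1
  map_zero : F 0 = 1
  logConcave : IsLogConcave F
  lowerSemicontinuous : LowerSemicontinuous F

theorem lowerSemicontinuous_ennreal_mul {α : Type*} [TopologicalSpace α] {f g : α → ℝ≥0∞}
    (hf : LowerSemicontinuous f) (hg : LowerSemicontinuous g) :
    LowerSemicontinuous fun x => f x * g x := by
  intro x c hc
  obtain ⟨u, hu, v, hv, huv⟩ : ∃ u < f x, ∃ v < g x, c < u * v := by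
    by_contra! hle
    exact hc.not_ge (ENNReal.mul_le_of_forall_lt hle)
  filter_upwards [hf x u hu, hg x v hv] with y hy hy'
  exact huv.trans_le (mul_le_mul' hy.le hy'.le)

theorem lintegral_ne_zero_of_lowerSemicontinuous {α : Type*} [TopologicalSpace α]
    [MeasurableSpace α] [OpensMeasurableSpace α] (μ : Measure α) [μ.IsOpenPosMeasure]
    {f : α → ℝ≥0∞} (hf : LowerSemicontinuous f) {x : α} (hx : f x ≠ 0) :
    ∫⁻ y, f y ∂μ ≠ 0 := by
  have hsupport : Function.support f = f ⁻¹' Ioi 0 := by ext; simp [pos_iff_ne_zero]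
  rw [← pos_iff_ne_zero, lintegral_pos_iff_support hf.measurable, hsupport]
  exact (hf.isOpen_preimage 0).measure_pos μ ⟨x, pos_iff_ne_zero.2 hx⟩

theorem lintegral_eq_ofReal_pow_mul_lintegral_comp_add_smul {V : Type*} [NormedAddCommGroup V]
    [NormedSpace ℝ V] [FiniteDimensional ℝ V] [MeasurableSpace V] [BorelSpace V] (μ : Measure V)
    [μ.IsAddHaarMeasure] {g : V → ℝ≥0∞} (hg : Measurable g) {r : ℝ} (hr : 0 < r) (c : V) :
    ∫⁻ x, g x ∂μ = ENNReal.ofReal (r ^ Module.finrank ℝ V) * ∫⁻ x, g (c + r • x) ∂μ := by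
  have hcomp : ∫⁻ x, g (c + r • x) ∂μ = ∫⁻ x, g (c + x) ∂(μ.map (r • ·)) := by
    rw [lintegral_map (by fun_prop) (by fun_prop)]
  rw [hcomp, Measure.map_addHaar_smul μ hr.ne', lintegral_smul_measure,
    lintegral_add_left_eq_self, smul_eq_mul, ← mul_assoc, ← ENNReal.ofReal_mul (by positivity),
    abs_of_pos (by positivity), mul_inv_cancel₀ (by positivity), ENNReal.ofReal_one, one_mul]

theorem lintegral_comp_add_half_smul {V : Type*} [NormedAddCommGroup V] [NormedSpace ℝ V]
    [FiniteDimensional ℝ V] [MeasurableSpace V] [BorelSpace V] (μ : Measure V)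
    [μ.IsAddHaarMeasure] {g : V → ℝ≥0∞} (hg : Measurable g) (c : V) :
    ∫⁻ x, g (c + (1 / 2 : ℝ) • x) ∂μ = 2 ^ Module.finrank ℝ V * ∫⁻ x, g x ∂μ := by
  have hcancel : (2 : ℝ≥0∞) ^ Module.finrank ℝ V * ENNReal.ofReal ((1 / 2) ^ Module.finrank ℝ V) =
      1 := by
    rw [ENNReal.ofReal_pow (by norm_num), ← mul_pow, ENNReal.ofReal_div_of_pos two_pos,
      ENNReal.ofReal_one, ENNReal.ofReal_ofNat,
      ENNReal.mul_div_cancel two_ne_zero ENNReal.ofNat_ne_top, one_pow]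
  rw [lintegral_eq_ofReal_pow_mul_lintegral_comp_add_smul μ hg one_half_pos c, ← mul_assoc,
    hcancel, one_mul]

theorem add_mul_neg_log_le_rpow_one_sub {u : ℝ≥0∞} (hu : u ≤ 1) {s : ℝ} (hs : 0 ≤ s) :
    u + ENNReal.ofReal s * (u * ENNReal.ofReal (-Real.log u.toReal)) ≤ u ^ (1 - s) := by
  rcases eq_or_ne u 0 with rfl | hu₀
  · simp
  lift u to NNReal using ne_top_of_le_ne_top ENNReal.one_ne_top hu
  have hpos : (0 : ℝ) < u := by exact_mod_cast pos_iff_ne_zero.2 hu₀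
  have hlog : 0 ≤ -Real.log u := by
    simpa using Real.log_nonpos hpos.le (by exact_mod_cast hu)
  rw [ENNReal.coe_toReal, ← ENNReal.ofReal_coe_nnreal, ENNReal.ofReal_rpow_of_pos hpos,
    ← ENNReal.ofReal_mul hpos.le, ← ENNReal.ofReal_mul hs,
    ← ENNReal.ofReal_add hpos.le (by positivity)]
  refine ENNReal.ofReal_le_ofReal ?_
  calc u + s * (u * -Real.log u) = u * (s * -Real.log u + 1) := by ring
    _ ≤ u * Real.exp (s * -Real.log u) := by gcongr; exact Real.add_one_le_exp _
    _ = u ^ (1 - s) := by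
      rw [Real.rpow_sub hpos, Real.rpow_one, Real.rpow_def_of_pos hpos, div_eq_mul_inv,
        ← Real.exp_neg]
      ring_nf

namespace IsNormalizedLogConcave

section Operations

variable {V W : Type*} [AddCommGroup V] [Module ℝ V] [TopologicalSpace V]
  [AddCommGroup W] [Module ℝ W] [TopologicalSpace W] {F : V → ℝ≥0∞} {G : W → ℝ≥0∞}

theorem measurable [MeasurableSpace V] [OpensMeasurableSpace V]
    (hF : IsNormalizedLogConcave F) : Measurable F :=
  hF.lowerSemicontinuous.measurable

theorem rpow (hF : IsNormalizedLogConcave F) {β : ℝ} (hβ : 0 ≤ β) :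
    IsNormalizedLogConcave fun x => F x ^ β where
  le_one x := ENNReal.rpow_le_one (hF.le_one x) hβ
  map_zero := by simp [hF.map_zero]
  logConcave := hF.logConcave.rpow hβ
  lowerSemicontinuous := ENNReal.continuous_rpow_const.comp_lowerSemicontinuous
    hF.lowerSemicontinuous fun _ _ h => ENNReal.rpow_le_rpow h hβ

theorem comp_continuousLinearMap (hF : IsNormalizedLogConcave F) (L : W →L[ℝ] V) :
    IsNormalizedLogConcave fun x => F (L x) where
  le_one x := hF.le_one (L x)
  map_zero := by rw [_root_.map_zero, hF.map_zero]
  logConcave := hF.logConcave.comp_linearMap L.toLinearMap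
  lowerSemicontinuous := hF.lowerSemicontinuous.comp L.continuous

theorem prod (hF : IsNormalizedLogConcave F) (hG : IsNormalizedLogConcave G) :
    IsNormalizedLogConcave fun q : V × W => F q.1 * G q.2 where
  le_one q := mul_le_one' (hF.le_one q.1) (hG.le_one q.2)
  map_zero := by simp [hF.map_zero, hG.map_zero]
  logConcave := (hF.logConcave.comp_linearMap (LinearMap.fst ℝ V W)).mul
    (hG.logConcave.comp_linearMap (LinearMap.snd ℝ V W))
  lowerSemicontinuous := lowerSemicontinuous_ennreal_mul
    (hF.lowerSemicontinuous.comp continuous_fst) (hG.lowerSemicontinuous.comp continuous_snd)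

theorem rpow_le_map_smul (hF : IsNormalizedLogConcave F) (x : V) {t : ℝ} (ht₀ : 0 ≤ t)
    (ht₁ : t ≤ 1) : F x ^ t ≤ F (t • x) := by
  simpa [hF.map_zero] using hF.logConcave x 0 t (1 - t) ht₀ (by linarith) (by ring)

end Operations

section Haar

variable {V : Type*} [NormedAddCommGroup V] [NormedSpace ℝ V] [FiniteDimensional ℝ V]
  [MeasurableSpace V] [BorelSpace V] {F : V → ℝ≥0∞}

theorem ofReal_pow_mul_lintegral_rpow_le (hF : IsNormalizedLogConcave F) (μ : Measure V)
    [μ.IsAddHaarMeasure] {t : ℝ} (ht₀ : 0 < t) (ht₁ : t ≤ 1) :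
    ENNReal.ofReal (t ^ Module.finrank ℝ V) * ∫⁻ x, F x ^ t ∂μ ≤ ∫⁻ x, F x ∂μ := by
  rw [lintegral_eq_ofReal_pow_mul_lintegral_comp_add_smul μ hF.measurable ht₀ 0]
  gcongr with x
  simpa using hF.rpow_le_map_smul x ht₀.le ht₁

theorem lintegral_rpow_one_sub_le_two_mul (hF : IsNormalizedLogConcave F) (μ : Measure V)
    [μ.IsAddHaarMeasure] [Nontrivial V] :
    ∫⁻ x, F x ^ (1 - 1 / (2 * Module.finrank ℝ V) : ℝ) ∂μ ≤ 2 * ∫⁻ x, F x ∂μ := by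
  set s : ℝ := 1 / (2 * Module.finrank ℝ V) with hs
  have hm : (1 : ℝ) ≤ Module.finrank ℝ V := by exact_mod_cast Module.finrank_pos (R := ℝ) (M := V)
  have hms : (Module.finrank ℝ V : ℝ) * s = 1 / 2 := by rw [hs]; field_simp
  have hs₀ : 0 < s := by positivity
  have hs₁ : s ≤ 1 / 2 := by nlinarith
  have hpow : (1 / 2 : ℝ) ≤ (1 - s) ^ Module.finrank ℝ V := by
    have hbernoulli := one_add_mul_le_pow (a := -s) (by linarith) (Module.finrank ℝ V)
    rw [← sub_eq_add_neg] at hbernoulli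
    linarith
  calc ∫⁻ x, F x ^ (1 - s) ∂μ
      = 2 * (ENNReal.ofReal (1 / 2) * ∫⁻ x, F x ^ (1 - s) ∂μ) := by
        rw [← mul_assoc, ENNReal.ofReal_div_of_pos two_pos, ENNReal.ofReal_one,
          ENNReal.ofReal_ofNat, ENNReal.mul_div_cancel two_ne_zero ENNReal.ofNat_ne_top, one_mul]
    _ ≤ 2 * (ENNReal.ofReal ((1 - s) ^ Module.finrank ℝ V) * ∫⁻ x, F x ^ (1 - s) ∂μ) := by gcongr
    _ ≤ 2 * ∫⁻ x, F x ∂μ := by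
        gcongr
        exact hF.ofReal_pow_mul_lintegral_rpow_le μ (by linarith) (by linarith)

theorem lintegral_neg_log_le (hF : IsNormalizedLogConcave F) (μ : Measure V)
    [μ.IsAddHaarMeasure] [Nontrivial V] (hI : ∫⁻ x, F x ∂μ ≠ ∞) :
    ∫⁻ x, ENNReal.ofReal (-Real.log (F x).toReal) ∂μ.withDensity F ≤
      ENNReal.ofReal (2 * Module.finrank ℝ V) * ∫⁻ x, F x ∂μ := by
  have hm : (0 : ℝ) < Module.finrank ℝ V := by exact_mod_cast Module.finrank_pos (R := ℝ) (M := V)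
  have hF_meas := hF.measurable
  rw [lintegral_withDensity_eq_lintegral_mul _ hF_meas (by fun_prop)]
  simp only [Pi.mul_apply]
  set s : ℝ := 1 / (2 * Module.finrank ℝ V) with hs
  set E := ∫⁻ x, F x * ENNReal.ofReal (-Real.log (F x).toReal) ∂μ
  have hsE : ENNReal.ofReal s * E ≤ ∫⁻ x, F x ∂μ := by
    rw [← ENNReal.add_le_add_iff_left hI, ← two_mul,
      ← lintegral_const_mul' _ _ ENNReal.ofReal_ne_top, ← lintegral_add_left hF_meas]
    exact (lintegral_mono fun x =>
      add_mul_neg_log_le_rpow_one_sub (hF.le_one x) (by positivity)).trans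
        (hF.lintegral_rpow_one_sub_le_two_mul μ)
  calc E = ENNReal.ofReal (2 * Module.finrank ℝ V) * (ENNReal.ofReal s * E) := by
        rw [← mul_assoc, ← ENNReal.ofReal_mul (by positivity), hs,
          mul_one_div_cancel (by positivity), ENNReal.ofReal_one, one_mul]
    _ ≤ ENNReal.ofReal (2 * Module.finrank ℝ V) * ∫⁻ x, F x ∂μ := by gcongr

end Haar

end IsNormalizedLogConcave

/-! ### Correlations, marginals and fibrewise suprema -/

/-- The largest product of two values of `G` at points differing by `y`. -/
def supCorrelation {V : Type*} [Sub V] (G : V → ℝ≥0∞) (y : V) : ℝ≥0∞ :=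
  ⨆ a, G a * G (a - y)

/-- The autocorrelation of `G` with respect to `μ`, the integral counterpart of
`supCorrelation`. -/
def correlation {V : Type*} [Sub V] [MeasurableSpace V] (μ : Measure V) (G : V → ℝ≥0∞) (y : V) :
    ℝ≥0∞ :=
  ∫⁻ v, G v * G (v - y) ∂μ

/-- The marginal of a function on a product, obtained by integrating out the second variable. -/
def fiberIntegral {Z X : Type*} [MeasurableSpace X] (ν : Measure X) (G : Z × X → ℝ≥0∞) (z : Z) :
    ℝ≥0∞ :=
  ∫⁻ x, G (z, x) ∂ν

/-- The supremum of a function on a product over the second variable; for the indicator of a set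
this is the indicator of its projection. -/
def fiberSup {Z X : Type*} (G : Z × X → ℝ≥0∞) (z : Z) : ℝ≥0∞ :=
  ⨆ x, G (z, x)

theorem le_fiberSup {Z X : Type*} (G : Z × X → ℝ≥0∞) (v : Z × X) : G v ≤ fiberSup G v.1 :=
  le_iSup (fun x => G (v.1, x)) v.2

-- The substitution `v = (1 - t) • a + t • u` replaces the supremum over `a` by an integral.
theorem IsLogConcave.mul_supCorrelation_le_correlation {V : Type*} [NormedAddCommGroup V]
    [NormedSpace ℝ V] [FiniteDimensional ℝ V] [MeasurableSpace V] [BorelSpace V] {G : V → ℝ≥0∞}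
    (hG : IsLogConcave G) (hG_le : ∀ v, G v ≤ 1) (hG_meas : Measurable G) (μ : Measure V)
    [μ.IsAddHaarMeasure] {t : ℝ} (ht₀ : 0 < t) (ht₁ : t ≤ 1) (y : V) :
    ENNReal.ofReal (t ^ Module.finrank ℝ V) * (∫⁻ v, G v ^ 2 ∂μ) * supCorrelation G y ≤
      correlation μ G ((1 - t) • y) := by
  have hpoint : ∀ a u : V, G a * G (a - y) * G u ^ 2 ≤
      G ((1 - t) • a + t • u) * G ((1 - t) • a + t • u - (1 - t) • y) := by
    intro a u
    have hconv : ∀ b : V, G b * G u ≤ G ((1 - t) • b + t • u) := fun b =>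
      hG.mul_le_of_le_one hG_le b u (by linarith) ht₀.le (by ring)
    calc G a * G (a - y) * G u ^ 2 = G a * G u * (G (a - y) * G u) := by ring
      _ ≤ G ((1 - t) • a + t • u) * G ((1 - t) • (a - y) + t • u) :=
        mul_le_mul' (hconv a) (hconv (a - y))
      _ = G ((1 - t) • a + t • u) * G ((1 - t) • a + t • u - (1 - t) • y) := by
        rw [smul_sub, sub_add_eq_add_sub]
  rw [supCorrelation, ENNReal.mul_iSup]
  refine iSup_le fun a => ?_
  have hscale := lintegral_eq_ofReal_pow_mul_lintegral_comp_add_smul μ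
    (g := fun v => G v * G (v - (1 - t) • y)) (by fun_prop) ht₀ ((1 - t) • a)
  rw [correlation, hscale, mul_assoc, mul_comm (∫⁻ v, G v ^ 2 ∂μ),
    ← lintegral_const_mul _ (by fun_prop)]
  exact mul_le_mul' le_rfl (lintegral_mono fun u => by
    simpa only [mul_comm, mul_assoc] using hpoint a u)

section Product

variable {Z X : Type*} [MeasurableSpace Z] [MeasurableSpace X] {μ : Measure Z} {ν : Measure X}
  {G : Z × X → ℝ≥0∞}

theorem measurable_fiberIntegral [SFinite ν] (hG : Measurable G) :
    Measurable (fiberIntegral ν G) :=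
  hG.lintegral_prod_right'

theorem lintegral_fiberIntegral [SFinite ν] (hG : Measurable G) :
    ∫⁻ z, fiberIntegral ν G z ∂μ = ∫⁻ v, G v ∂(μ.prod ν) :=
  (lintegral_prod _ hG.aemeasurable).symm

end Product

section Fiber

variable {Z X : Type*} [AddCommGroup Z] [Module ℝ Z] [MeasurableSpace Z] [NormedAddCommGroup X]
  [NormedSpace ℝ X] [FiniteDimensional ℝ X] [MeasurableSpace X] [BorelSpace X]
  {G : Z × X → ℝ≥0∞}

theorem isLogConcave_fiberIntegral (hG : IsLogConcave G) (hG_meas : Measurable G)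
    (ν : Measure X) [ν.IsAddHaarMeasure] : IsLogConcave (fiberIntegral ν G) := by
  intro z z' a b ha hb hab
  rcases ha.eq_or_lt with rfl | ha
  · obtain rfl : b = 1 := by linarith
    simp
  rcases hb.eq_or_lt with rfl | hb
  · obtain rfl : a = 1 := by linarith
    simp
  refine prekopaLeindler_addHaar ν ha hb hab (by fun_prop) (by fun_prop) (by fun_prop)
    fun x x' => ?_
  simpa using hG (z, x) (z', x') a b ha.le hb.le hab

theorem IsLogConcave.fiberIntegral_mul_fiberSup_le (hG : IsLogConcave G)
    (hG_meas : Measurable G) (ν : Measure X) [ν.IsAddHaarMeasure] (z z' : Z) :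
    fiberIntegral ν G z * fiberSup G z' ≤ 2 ^ Module.finrank ℝ X *
      fiberIntegral ν (fun v => G v ^ 2) ((1 / 2 : ℝ) • z + (1 / 2 : ℝ) • z') := by
  rw [fiberSup, ENNReal.mul_iSup]
  refine iSup_le fun x' => ?_
  rw [fiberIntegral, fiberIntegral, ← lintegral_comp_add_half_smul ν (by fun_prop)
    ((1 / 2 : ℝ) • x'), ← lintegral_mul_const _ (by fun_prop)]
  refine lintegral_mono fun x => ?_
  simpa [add_comm] using hG.mul_le_sq_midpoint (z, x) (z', x')

end Fiber

section Haar

variable {Z X : Type*} [NormedAddCommGroup Z] [NormedSpace ℝ Z] [FiniteDimensional ℝ Z]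
  [MeasurableSpace Z] [BorelSpace Z] [NormedAddCommGroup X] [NormedSpace ℝ X]
  [FiniteDimensional ℝ X] [MeasurableSpace X] [BorelSpace X] {G : Z × X → ℝ≥0∞}

theorem lintegral_correlation_prod (hG : Measurable G) (μ : Measure Z) [SFinite μ]
    (ν : Measure X) [ν.IsAddHaarMeasure] :
    ∫⁻ x, correlation (μ.prod ν) G (0, x) ∂ν = ∫⁻ z, fiberIntegral ν G z ^ 2 ∂μ := by
  have hinner : ∀ z, ∫⁻ x', ∫⁻ x, G (z, x') * G ((z, x') - (0, x)) ∂ν ∂ν =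
      fiberIntegral ν G z ^ 2 := by
    intro z
    calc ∫⁻ x', ∫⁻ x, G (z, x') * G ((z, x') - (0, x)) ∂ν ∂ν
        = ∫⁻ x', G (z, x') * fiberIntegral ν G z ∂ν := by
          refine lintegral_congr fun x' => ?_
          rw [lintegral_const_mul _ (by fun_prop)]
          congr 1
          simpa [fiberIntegral] using lintegral_sub_left_eq_self (μ := ν) (fun x => G (z, x)) x'
      _ = fiberIntegral ν G z ^ 2 := by
          rw [lintegral_mul_const _ (by fun_prop), sq, fiberIntegral]
  have hmeas : Measurable fun p : (Z × X) × X => G p.1 * G (p.1 - (0, p.2)) := by fun_prop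
  simp only [← hinner, correlation]
  rw [← lintegral_prod (μ := μ) (ν := ν) (fun v => ∫⁻ x, G v * G (v - (0, x)) ∂ν)
    hmeas.lintegral_prod_right'.aemeasurable, lintegral_lintegral_swap]
  fun_prop

theorem IsLogConcave.lintegral_supCorrelation_le (hG : IsLogConcave G) (hG_le : ∀ v, G v ≤ 1)
    (hG_meas : Measurable G) (μ : Measure Z) [μ.IsAddHaarMeasure] (ν : Measure X)
    [ν.IsAddHaarMeasure] {t : ℝ} (ht₀ : 0 < t) (ht₁ : t < 1) :
    ENNReal.ofReal (t ^ Module.finrank ℝ (Z × X)) *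
        ENNReal.ofReal ((1 - t) ^ Module.finrank ℝ X) * (∫⁻ v, G v ^ 2 ∂(μ.prod ν)) *
        ∫⁻ x, supCorrelation G (0, x) ∂ν ≤
      ∫⁻ z, fiberIntegral ν G z ^ 2 ∂μ := by
  have hcorr_meas : Measurable fun x : X => correlation (μ.prod ν) G (0, x) := by
    have hmeas : Measurable fun p : X × (Z × X) => G p.2 * G (p.2 - (0, p.1)) := by fun_prop
    exact hmeas.lintegral_prod_right'
  rw [← lintegral_correlation_prod hG_meas μ ν, mul_comm (ENNReal.ofReal _), mul_assoc, mul_assoc,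
    lintegral_eq_ofReal_pow_mul_lintegral_comp_add_smul ν hcorr_meas (sub_pos.2 ht₁) 0,
    ← mul_assoc (ENNReal.ofReal (t ^ _))]
  gcongr
  refine (lintegral_const_mul_le _ _).trans (lintegral_mono fun x => ?_)
  simpa using hG.mul_supCorrelation_le_correlation hG_le hG_meas (μ.prod ν) ht₀ ht₁.le (0, x)

theorem IsLogConcave.lintegral_fiberIntegral_sq_mul_le (hG : IsLogConcave G)
    (hG_meas : Measurable G) (hsup_meas : Measurable (fiberSup G)) (μ : Measure Z)
    [μ.IsAddHaarMeasure] (ν : Measure X) [ν.IsAddHaarMeasure] :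
    (∫⁻ z, fiberIntegral ν G z ^ 2 ∂μ) * (∫⁻ z, fiberSup G z ^ 2 ∂μ) ≤
      4 ^ Module.finrank ℝ X * (∫⁻ v, G v ^ 2 ∂(μ.prod ν)) ^ 2 := by
  have hsqrt : ∀ u : ℝ≥0∞, (u ^ 2) ^ (1 / 2 : ℝ) = u := fun u => by
    rw [← ENNReal.rpow_natCast_mul]; norm_num
  have hI_meas := measurable_fiberIntegral (ν := ν) hG_meas
  have hI_sq_meas := measurable_fiberIntegral (ν := ν) (hG_meas.pow_const 2)
  have hPL := prekopaLeindler_addHaar μ (a := 1 / 2) (b := 1 / 2) (by norm_num) (by norm_num)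
    (by norm_num) (f := fun z => fiberIntegral ν G z ^ 2) (g := fun z => fiberSup G z ^ 2)
    (h := fun z => 2 ^ Module.finrank ℝ X * fiberIntegral ν (fun v => G v ^ 2) z)
    (by fun_prop) (by fun_prop) (by fun_prop)
    (fun z z' => by
      rw [hsqrt, hsqrt]
      exact hG.fiberIntegral_mul_fiberSup_le hG_meas ν z z')
  rw [lintegral_const_mul _ hI_sq_meas, lintegral_fiberIntegral (hG_meas.pow_const 2)] at hPL
  have hPL_sq := pow_le_pow_left' hPL 2
  rwa [mul_pow, mul_pow, ennreal_rpow_half_sq, ennreal_rpow_half_sq, ← pow_mul, mul_comm _ 2,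
    pow_mul, show (2 : ℝ≥0∞) ^ 2 = 4 by norm_num] at hPL_sq

end Haar

/-! ### Jensen's inequality for marginals -/

/-- The hypograph of `log h`, as a set of pairs whose second entry is a real number: points where
`h` vanishes contribute nothing, and points where `h = ∞` contribute a whole line. -/
def logHypograph {Z : Type*} (h : Z → ℝ≥0∞) : Set (Z × ℝ) :=
  {q | ENNReal.ofReal (Real.exp q.2) ≤ h q.1}

theorem IsLogConcave.convex_logHypograph {Z : Type*} [AddCommGroup Z] [Module ℝ Z] {h : Z → ℝ≥0∞}
    (hh : IsLogConcave h) : Convex ℝ (logHypograph h) := by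
  rintro ⟨z, r⟩ hz ⟨z', r'⟩ hz' a b ha hb hab
  have hexp : ENNReal.ofReal (Real.exp (a * r + b * r')) =
      ENNReal.ofReal (Real.exp r) ^ a * ENNReal.ofReal (Real.exp r') ^ b := by
    rw [ENNReal.ofReal_rpow_of_pos (Real.exp_pos _), ENNReal.ofReal_rpow_of_pos (Real.exp_pos _),
      ← ENNReal.ofReal_mul (by positivity), ← Real.exp_mul, ← Real.exp_mul, ← Real.exp_add,
      mul_comm r, mul_comm r']
  calc ENNReal.ofReal (Real.exp (a * r + b * r'))
      = ENNReal.ofReal (Real.exp r) ^ a * ENNReal.ofReal (Real.exp r') ^ b := hexp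
    _ ≤ h z ^ a * h z' ^ b :=
      mul_le_mul' (ENNReal.rpow_le_rpow hz ha) (ENNReal.rpow_le_rpow hz' hb)
    _ ≤ h (a • z + b • z') := hh z z' a b ha hb hab

theorem IsLogConcave.average_mem_closure_logHypograph {Z Ω : Type*} [NormedAddCommGroup Z]
    [NormedSpace ℝ Z] [CompleteSpace Z] [MeasurableSpace Ω] {κ : Measure Ω} [IsFiniteMeasure κ]
    [NeZero κ] {h : Z → ℝ≥0∞} (hh : IsLogConcave h) {ζ : Ω → Z} {r : Ω → ℝ}
    (hζ : Integrable ζ κ) (hr : Integrable r κ) (hmem : ∀ᵐ ω ∂κ, (ζ ω, r ω) ∈ logHypograph h) :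
    (⨍ ω, ζ ω ∂κ, ⨍ ω, r ω ∂κ) ∈ closure (logHypograph h) := by
  rw [← average_pair hζ hr]
  exact hh.convex_logHypograph.closure.average_mem isClosed_closure
    (hmem.mono fun ω hω => subset_closure hω) (hζ.prodMk hr)

theorem average_toReal_le {Ω : Type*} [MeasurableSpace Ω] {κ : Measure Ω} [IsFiniteMeasure κ]
    {g : Ω → ℝ≥0∞} (hg : AEMeasurable g κ) {a : ℝ} (ha : 0 ≤ a)
    (hle : ∫⁻ ω, g ω ∂κ ≤ ENNReal.ofReal a * κ univ) : ⨍ ω, (g ω).toReal ∂κ ≤ a := by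
  have hmass : ENNReal.ofReal a * κ univ ≠ ∞ :=
    ENNReal.mul_ne_top ENNReal.ofReal_ne_top (measure_ne_top κ univ)
  have hint : ∫ ω, (g ω).toReal ∂κ ≤ a * κ.real univ := by
    rw [integral_toReal hg (ae_lt_top' hg (ne_top_of_le_ne_top hmass hle))]
    simpa [measureReal_def, ENNReal.toReal_ofReal ha] using ENNReal.toReal_mono hmass hle
  rw [average_eq, smul_eq_mul]
  rcases (measureReal_nonneg (μ := κ) (s := univ)).eq_or_lt with hzero | hpos
  · simpa [← hzero] using ha
  · rwa [inv_mul_le_iff₀ hpos, mul_comm]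

theorem average_const_sub {Ω : Type*} [MeasurableSpace Ω] {κ : Measure Ω} [IsFiniteMeasure κ]
    [NeZero κ] {g : Ω → ℝ} (hg : Integrable g κ) (c : ℝ) :
    ⨍ ω, (c - g ω) ∂κ = c - ⨍ ω, g ω ∂κ := by
  rw [average, integral_sub (integrable_const c) hg.to_average, integral_const, probReal_univ,
    one_smul, average]

theorem isLogConcave_const {V : Type*} [Add V] [SMul ℝ V] (c : ℝ≥0∞) :
    IsLogConcave fun _ : V => c := by
  intro x y a b ha hb hab
  rw [← ENNReal.rpow_add_of_nonneg a b ha hb, hab, ENNReal.rpow_one]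

theorem lowerSemicontinuous_fiberSup {Z X : Type*} [TopologicalSpace Z] [TopologicalSpace X]
    {G : Z × X → ℝ≥0∞} (hG : LowerSemicontinuous G) : LowerSemicontinuous (fiberSup G) :=
  lowerSemicontinuous_iSup fun _ => hG.comp (continuous_id.prodMk continuous_const)

section Fiber

variable {Z X : Type*} [MeasurableSpace Z] [MeasurableSpace X] {F : Z × X → ℝ≥0∞}

theorem fiberIntegral_le_fiberIntegral_rpow_mul (hF : Measurable F) (ν : Measure X) {β : ℝ}
    (hβ₀ : 0 ≤ β) (hβ₁ : β ≤ 1) (z : Z) :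
    fiberIntegral ν F z ≤ fiberIntegral ν (fun v => F v ^ β) z * fiberSup F z ^ (1 - β) := by
  rw [fiberIntegral, fiberIntegral, ← lintegral_mul_const _ (by fun_prop)]
  refine lintegral_mono fun x => ?_
  calc F (z, x) = F (z, x) ^ β * F (z, x) ^ (1 - β) := by
        rw [← ENNReal.rpow_add_of_nonneg _ _ hβ₀ (by linarith), add_sub_cancel, ENNReal.rpow_one]
    _ ≤ F (z, x) ^ β * fiberSup F z ^ (1 - β) :=
        mul_le_mul' le_rfl (ENNReal.rpow_le_rpow (le_fiberSup F (z, x)) (by linarith))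

theorem lintegral_fiberSup_rpow_div_le (hF : Measurable F) (hsup : Measurable (fiberSup F))
    (μ : Measure Z) (ν : Measure X) [SFinite ν] {β : ℝ} (hβ₀ : 0 ≤ β) (hβ₁ : β ≤ 1) :
    ∫⁻ v, fiberSup F v.1 ^ β / fiberIntegral ν (fun v => F v ^ β) v.1 ∂(μ.prod ν).withDensity F ≤
      ∫⁻ z, fiberSup F z ∂μ := by
  have hpow := measurable_fiberIntegral (ν := ν) (hF.pow_const β)
  set h := fiberIntegral ν fun v => F v ^ β
  rw [lintegral_withDensity_eq_lintegral_mul _ hF (by fun_prop), lintegral_prod _ (by fun_prop)]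
  refine lintegral_mono fun z => ?_
  simp only [Pi.mul_apply]
  rw [lintegral_mul_const _ (by fun_prop)]
  calc fiberIntegral ν F z * (fiberSup F z ^ β / h z)
      ≤ h z * fiberSup F z ^ (1 - β) * (fiberSup F z ^ β / h z) :=
        mul_le_mul' (fiberIntegral_le_fiberIntegral_rpow_mul hF ν hβ₀ hβ₁ z) le_rfl
    _ = fiberSup F z ^ (1 - β) * (h z * (fiberSup F z ^ β / h z)) := by ring
    _ ≤ fiberSup F z ^ (1 - β) * fiberSup F z ^ β := by
        gcongr
        exact ENNReal.mul_div_le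
    _ = fiberSup F z := by
        rw [← ENNReal.rpow_add_of_nonneg _ _ (by linarith) hβ₀, sub_add_cancel, ENNReal.rpow_one]

end Fiber

-- `log w ≤ w - 1` at `w = p ^ β / h` bounds `log h` below by a function with computable mean.
theorem ofReal_exp_one_sub_le {u p h : ℝ≥0∞} (hu₀ : u ≠ 0) (hup : u ≤ p) (hp : p ≤ 1)
    (hh : h ≠ 0) {β : ℝ} (hβ : 0 ≤ β) :
    ENNReal.ofReal (Real.exp (1 -
      (ENNReal.ofReal β * ENNReal.ofReal (-Real.log u.toReal) + p ^ β / h).toReal)) ≤ h := by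
  rcases eq_or_ne h ∞ with rfl | hh_top
  · exact le_top
  lift p to NNReal using ne_top_of_le_ne_top ENNReal.one_ne_top hp
  lift u to NNReal using ne_top_of_le_ne_top ENNReal.coe_ne_top hup
  lift h to NNReal using hh_top
  norm_cast at hu₀ hup hp hh
  have hu_pos : (0 : ℝ) < u := by positivity
  have hup' : (u : ℝ) ≤ p := by exact_mod_cast hup
  have hp_pos : (0 : ℝ) < p := hu_pos.trans_le hup'
  have hh_pos : (0 : ℝ) < h := by positivity
  have hlog : 0 ≤ -Real.log u := by
    simpa using Real.log_nonpos hu_pos.le (hup'.trans (by exact_mod_cast hp))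
  have htoReal : (ENNReal.ofReal β * ENNReal.ofReal (-Real.log u) + (p : ℝ≥0∞) ^ β / h).toReal =
      β * -Real.log u + (p : ℝ) ^ β / h := by
    rw [ENNReal.toReal_add (by finiteness) (by finiteness)]
    simp [← ENNReal.toReal_rpow, hβ, hlog]
  have hw := Real.log_le_sub_one_of_pos (show (0 : ℝ) < (p : ℝ) ^ β / h by positivity)
  rw [Real.log_div (by positivity) hh_pos.ne', Real.log_rpow hp_pos] at hw
  have hlog_mono : β * Real.log u ≤ β * Real.log p := by gcongr
  refine ENNReal.ofReal_le_of_le_toReal ?_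
  rw [ENNReal.coe_toReal, ENNReal.coe_toReal, htoReal, ← Real.le_log_iff_exp_le hh_pos]
  linarith

/-- A lower bound for `log (c * fiberIntegral ν (F ^ β) v.1)` is `1` minus this quantity, whose
mean with respect to the density `F` is controlled by the entropy of `F` and by the integral of
`fiberSup F`. -/
def marginalLogDefect {Z X : Type*} [MeasurableSpace X] (ν : Measure X) (F : Z × X → ℝ≥0∞)
    (β : ℝ) (c : ℝ≥0∞) (v : Z × X) : ℝ≥0∞ :=
  ENNReal.ofReal β * ENNReal.ofReal (-Real.log (F v).toReal) +
    fiberSup F v.1 ^ β / (c * fiberIntegral ν (fun v => F v ^ β) v.1)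

namespace IsNormalizedLogConcave

theorem lintegral_ne_zero {V : Type*} [AddCommGroup V] [Module ℝ V] [TopologicalSpace V]
    [MeasurableSpace V] [OpensMeasurableSpace V] {F : V → ℝ≥0∞} (hF : IsNormalizedLogConcave F)
    (μ : Measure V) [μ.IsOpenPosMeasure] : ∫⁻ v, F v ∂μ ≠ 0 :=
  lintegral_ne_zero_of_lowerSemicontinuous μ hF.lowerSemicontinuous (x := 0)
    (by simp [hF.map_zero])

section FiberSup

variable {Z X : Type*} [AddCommGroup Z] [Module ℝ Z] [TopologicalSpace Z]
  [AddCommGroup X] [Module ℝ X] [TopologicalSpace X] {F : Z × X → ℝ≥0∞}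

theorem measurable_fiberSup [MeasurableSpace Z] [OpensMeasurableSpace Z]
    (hF : IsNormalizedLogConcave F) : Measurable (fiberSup F) :=
  (lowerSemicontinuous_fiberSup hF.lowerSemicontinuous).measurable

theorem lintegral_fiberSup_ne_zero [MeasurableSpace Z] [OpensMeasurableSpace Z]
    (hF : IsNormalizedLogConcave F) (μ : Measure Z) [μ.IsOpenPosMeasure] :
    ∫⁻ z, fiberSup F z ∂μ ≠ 0 := by
  have hone : 1 ≤ fiberSup F 0 := hF.map_zero.symm.trans_le (le_fiberSup F 0)
  exact lintegral_ne_zero_of_lowerSemicontinuous μ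
    (lowerSemicontinuous_fiberSup hF.lowerSemicontinuous) (one_pos.trans_le hone).ne'

theorem mk_one_sub_marginalLogDefect_mem_logHypograph [MeasurableSpace X]
    [OpensMeasurableSpace X] (hF : IsNormalizedLogConcave F) (ν : Measure X) [ν.IsOpenPosMeasure]
    {β : ℝ} (hβ : 0 < β) {c : ℝ≥0∞} (hc : c ≠ 0) {v : Z × X} (hv : F v ≠ 0) :
    (v.1, 1 - (marginalLogDefect ν F β c v).toReal) ∈
      logHypograph fun z => c * fiberIntegral ν (fun v => F v ^ β) z := by
  have hne : fiberIntegral ν (fun v => F v ^ β) v.1 ≠ 0 :=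
    lintegral_ne_zero_of_lowerSemicontinuous ν
      ((hF.rpow hβ.le).lowerSemicontinuous.comp (Continuous.prodMk_right v.1)) (x := v.2)
      (by simp [hv, hβ.le])
  exact ofReal_exp_one_sub_le hv (le_fiberSup F v) (iSup_le fun x => hF.le_one _)
    (mul_ne_zero hc hne) hβ.le

end FiberSup

section Fiber

variable {Z X : Type*} [NormedAddCommGroup Z] [NormedSpace ℝ Z] [NormedAddCommGroup X]
  [NormedSpace ℝ X] [FiniteDimensional ℝ X] [MeasurableSpace X] [BorelSpace X]
  {F K : Z × X → ℝ≥0∞}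

theorem fiberIntegral_le_two_pow_mul_fiberIntegral_zero (hK : IsNormalizedLogConcave K)
    (ν : Measure X) [ν.IsAddHaarMeasure] {z : Z} (hz : 2⁻¹ ≤ K (-z, 0)) :
    fiberIntegral ν K z ≤ 2 ^ (Module.finrank ℝ X + 1) * fiberIntegral ν K 0 := by
  have hK_meas : Measurable fun x => K (0, x) :=
    (hK.lowerSemicontinuous.comp (Continuous.prodMk_right 0)).measurable
  have hpoint : ∀ x, K (z, x) ≤ 2 * K (0, 0 + (1 / 2 : ℝ) • x) := by
    intro x
    have hmid := hK.logConcave.mul_le_of_le_one hK.le_one (z, x) (-z, 0)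
      (a := 1 / 2) (b := 1 / 2) (by norm_num) (by norm_num) (by norm_num)
    calc K (z, x) = 2 * (K (z, x) * 2⁻¹) := by
          rw [mul_left_comm, ENNReal.mul_inv_cancel two_ne_zero ENNReal.ofNat_ne_top, mul_one]
      _ ≤ 2 * (K (z, x) * K (-z, 0)) := by gcongr
      _ ≤ 2 * K (0, 0 + (1 / 2 : ℝ) • x) := by
          gcongr
          simpa using hmid
  calc fiberIntegral ν K z ≤ ∫⁻ x, 2 * K (0, 0 + (1 / 2 : ℝ) • x) ∂ν := lintegral_mono hpoint
    _ = 2 ^ (Module.finrank ℝ X + 1) * fiberIntegral ν K 0 := by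
      rw [lintegral_const_mul' _ _ ENNReal.ofNat_ne_top, lintegral_comp_add_half_smul ν hK_meas,
        ← mul_assoc, ← pow_succ', fiberIntegral]

theorem ofReal_exp_le_of_mem_closure_logHypograph (hK : IsNormalizedLogConcave K) (ν : Measure X)
    [ν.IsAddHaarMeasure] (c : ℝ≥0∞) {s : ℝ}
    (hs : ((0 : Z), s) ∈ closure (logHypograph fun z => c * fiberIntegral ν K z)) :
    ENNReal.ofReal (Real.exp (s - 1)) ≤
      c * (2 ^ (Module.finrank ℝ X + 1) * fiberIntegral ν K 0) := by
  have hK_near : ∀ᶠ q : Z × ℝ in nhds (0, s), 2⁻¹ < K (-q.1, 0) :=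
    (hK.lowerSemicontinuous.comp
      (by fun_prop : Continuous fun q : Z × ℝ => (-q.1, (0 : X)))) (0, s) 2⁻¹
      (by simp [← Prod.zero_eq_mk, hK.map_zero, ENNReal.inv_lt_one])
  have hs_near : ∀ᶠ q : Z × ℝ in nhds (0, s), s - 1 < q.2 :=
    continuous_snd.continuousAt.eventually (lt_mem_nhds (sub_one_lt s))
  obtain ⟨⟨z, r⟩, ⟨hz, hr⟩, hmem⟩ := mem_closure_iff_nhds.1 hs _ (hK_near.and hs_near)
  calc ENNReal.ofReal (Real.exp (s - 1)) ≤ ENNReal.ofReal (Real.exp r) := by gcongr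
    _ ≤ c * fiberIntegral ν K z := hmem
    _ ≤ c * (2 ^ (Module.finrank ℝ X + 1) * fiberIntegral ν K 0) := by
      gcongr
      exact hK.fiberIntegral_le_two_pow_mul_fiberIntegral_zero ν hz.le

theorem measurable_marginalLogDefect [MeasurableSpace Z] [BorelSpace Z]
    (hF : IsNormalizedLogConcave F) (ν : Measure X) [ν.IsAddHaarMeasure] (β : ℝ) (c : ℝ≥0∞) :
    Measurable (marginalLogDefect ν F β c) := by
  have hF_meas := hF.measurable
  have hsup_meas := hF.measurable_fiberSup
  have hpow_meas := measurable_fiberIntegral (ν := ν) (hF_meas.pow_const β)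
  unfold marginalLogDefect
  fun_prop

end Fiber

section Haar

variable {Z X : Type*} [NormedAddCommGroup Z] [NormedSpace ℝ Z] [FiniteDimensional ℝ Z]
  [MeasurableSpace Z] [BorelSpace Z] [NormedAddCommGroup X] [NormedSpace ℝ X]
  [FiniteDimensional ℝ X] [MeasurableSpace X] [BorelSpace X] {F : Z × X → ℝ≥0∞}
  (μ : Measure Z) [μ.IsAddHaarMeasure] (ν : Measure X) [ν.IsAddHaarMeasure]

theorem lintegral_fiberIntegral_sqrt_sq_mul_le (hF : IsNormalizedLogConcave F) :
    (∫⁻ z, fiberIntegral ν (fun v => F v ^ (1 / 2 : ℝ)) z ^ 2 ∂μ) * ∫⁻ z, fiberSup F z ∂μ ≤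
      4 ^ Module.finrank ℝ X * (∫⁻ v, F v ∂(μ.prod ν)) ^ 2 := by
  have hG := hF.rpow (β := 1 / 2) (by norm_num)
  have hsup : ∀ z, fiberSup F z ≤ fiberSup (fun v => F v ^ (1 / 2 : ℝ)) z ^ 2 := fun z =>
    iSup_le fun x => (ennreal_rpow_half_sq (F (z, x))).symm.trans_le
      (pow_le_pow_left' (le_fiberSup _ (z, x)) 2)
  calc _ ≤ (∫⁻ z, fiberIntegral ν (fun v => F v ^ (1 / 2 : ℝ)) z ^ 2 ∂μ) *
        ∫⁻ z, fiberSup (fun v => F v ^ (1 / 2 : ℝ)) z ^ 2 ∂μ := by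
        gcongr with z
        exact hsup z
    _ ≤ 4 ^ Module.finrank ℝ X * (∫⁻ v, (F v ^ (1 / 2 : ℝ)) ^ 2 ∂(μ.prod ν)) ^ 2 :=
        hG.logConcave.lintegral_fiberIntegral_sq_mul_le hG.measurable hG.measurable_fiberSup μ ν
    _ = 4 ^ Module.finrank ℝ X * (∫⁻ v, F v ∂(μ.prod ν)) ^ 2 := by simp only [ennreal_rpow_half_sq]

theorem lintegral_fiberSup_ne_top (hF : IsNormalizedLogConcave F)
    (hI : ∫⁻ v, F v ∂(μ.prod ν) ≠ ∞) : ∫⁻ z, fiberSup F z ∂μ ≠ ∞ := by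
  have hG := hF.rpow (β := 1 / 2) (by norm_num)
  have hmarginal := measurable_fiberIntegral (ν := ν) hG.measurable
  have hne : ∫⁻ z, fiberIntegral ν (fun v => F v ^ (1 / 2 : ℝ)) z ^ 2 ∂μ ≠ 0 := by
    intro hzero
    rw [lintegral_eq_zero_iff (by fun_prop)] at hzero
    refine hG.lintegral_ne_zero (μ.prod ν) ?_
    rw [← lintegral_fiberIntegral hG.measurable, lintegral_eq_zero_iff hmarginal]
    filter_upwards [hzero] with z hz
    simpa using hz
  intro htop
  have hle := hF.lintegral_fiberIntegral_sqrt_sq_mul_le μ ν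
  rw [htop, ENNReal.mul_top hne, top_le_iff] at hle
  exact ENNReal.mul_ne_top (by finiteness) (ENNReal.pow_ne_top hI) hle

theorem lintegral_marginalLogDefect_le [Nontrivial X] (hF : IsNormalizedLogConcave F)
    (hI : ∫⁻ v, F v ∂(μ.prod ν) ≠ ∞) {β : ℝ} (hβ₀ : 0 ≤ β) (hβ₁ : β ≤ 1) :
    ∫⁻ v, marginalLogDefect ν F β ((∫⁻ z, fiberSup F z ∂μ) / ∫⁻ v, F v ∂(μ.prod ν)) v
        ∂(μ.prod ν).withDensity F ≤
      ENNReal.ofReal (2 * β * Module.finrank ℝ (Z × X) + 1) * ∫⁻ v, F v ∂(μ.prod ν) := by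
  have hI₀ := hF.lintegral_ne_zero (μ.prod ν)
  have hP₀ := hF.lintegral_fiberSup_ne_zero μ
  have hP := hF.lintegral_fiberSup_ne_top μ ν hI
  have hentropy := hF.lintegral_neg_log_le (μ.prod ν) hI
  have hratio := lintegral_fiberSup_rpow_div_le hF.measurable hF.measurable_fiberSup μ ν hβ₀ hβ₁
  have hF_meas := hF.measurable
  set I := ∫⁻ v, F v ∂(μ.prod ν)
  set P := ∫⁻ z, fiberSup F z ∂μ
  have hc₀ : P / I ≠ 0 := ENNReal.div_ne_zero.2 ⟨hP₀, hI⟩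
  have hsplit : ∀ v : Z × X, fiberSup F v.1 ^ β / (P / I * fiberIntegral ν (fun v => F v ^ β) v.1) =
      (P / I)⁻¹ * (fiberSup F v.1 ^ β / fiberIntegral ν (fun v => F v ^ β) v.1) := by
    intro v
    rw [div_eq_mul_inv, ENNReal.mul_inv (.inl hc₀) (.inl (ENNReal.div_ne_top hP hI₀)),
      mul_left_comm, ← div_eq_mul_inv]
  simp only [marginalLogDefect, hsplit]
  rw [lintegral_add_left (by fun_prop), lintegral_const_mul' _ _ ENNReal.ofReal_ne_top,
    lintegral_const_mul' _ _ (ENNReal.inv_ne_top.2 hc₀)]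
  calc _ ≤ ENNReal.ofReal β * (ENNReal.ofReal (2 * Module.finrank ℝ (Z × X)) * I) +
        (P / I)⁻¹ * P := by gcongr
    _ = ENNReal.ofReal (2 * β * Module.finrank ℝ (Z × X) + 1) * I := by
        rw [ENNReal.inv_div (.inl hI) (.inl hI₀), ENNReal.div_mul_cancel hP₀ hP,
          ENNReal.ofReal_add (by positivity) zero_le_one, ENNReal.ofReal_one, add_mul, one_mul,
          ← mul_assoc, ← ENNReal.ofReal_mul hβ₀]
        ring_nf

-- Jensen's inequality moves the mean of the log-defect to the centroid, which lies over `0`.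
theorem exists_zero_mem_closure_logHypograph [Nontrivial X] (hF : IsNormalizedLogConcave F)
    (hI : ∫⁻ v, F v ∂(μ.prod ν) ≠ ∞)
    (hfst : Integrable (Prod.fst : Z × X → Z) ((μ.prod ν).withDensity F))
    (hcentered : ∫ v, v.1 ∂(μ.prod ν).withDensity F = 0) {β : ℝ} (hβ₀ : 0 < β) (hβ₁ : β ≤ 1) :
    ∃ s ≥ -(2 * β * Module.finrank ℝ (Z × X)), ((0 : Z), s) ∈ closure (logHypograph fun z =>
      (∫⁻ z, fiberSup F z ∂μ) / (∫⁻ v, F v ∂(μ.prod ν)) *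
        fiberIntegral ν (fun v => F v ^ β) z) := by
  have hK := hF.rpow hβ₀.le
  have hI₀ := hF.lintegral_ne_zero (μ.prod ν)
  have hdefect := hF.lintegral_marginalLogDefect_le μ ν hI hβ₀.le hβ₁
  set κ := (μ.prod ν).withDensity F with hκ
  set c := (∫⁻ z, fiberSup F z ∂μ) / ∫⁻ v, F v ∂(μ.prod ν)
  have hc₀ : c ≠ 0 := ENNReal.div_ne_zero.2 ⟨hF.lintegral_fiberSup_ne_zero μ, hI⟩
  set g := marginalLogDefect ν F β c
  have hmass : κ univ = ∫⁻ v, F v ∂(μ.prod ν) := by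
    rw [hκ, withDensity_apply _ .univ, setLIntegral_univ]
  have : IsFiniteMeasure κ := ⟨by rw [hmass]; exact hI.lt_top⟩
  have : NeZero κ := ⟨fun hzero => hI₀ (by rw [← hmass, hzero, Measure.coe_zero, Pi.zero_apply])⟩
  have hg_meas : Measurable g := hF.measurable_marginalLogDefect ν β c
  have hg_int : Integrable (fun v => (g v).toReal) κ := integrable_toReal_of_lintegral_ne_top
    hg_meas.aemeasurable (ne_top_of_le_ne_top (by finiteness) hdefect)
  have hg_avg := average_toReal_le hg_meas.aemeasurable (by positivity) (hmass ▸ hdefect)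
  have hmem : ∀ᵐ v ∂κ, (v.1, 1 - (g v).toReal) ∈
      logHypograph fun z => c * fiberIntegral ν (fun v => F v ^ β) z := by
    rw [hκ, ae_withDensity_iff hF.measurable]
    exact .of_forall fun v hv => hF.mk_one_sub_marginalLogDefect_mem_logHypograph ν hβ₀ hc₀ hv
  have hclosure := ((isLogConcave_const c).mul (isLogConcave_fiberIntegral hK.logConcave
    hK.measurable ν)).average_mem_closure_logHypograph (r := fun v => 1 - (g v).toReal) hfst
      ((integrable_const 1).sub hg_int) hmem
  refine ⟨_, ?_, by rwa [average_eq, hcentered, smul_zero] at hclosure⟩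
  rw [ge_iff_le, average_const_sub hg_int]
  linarith

theorem ofReal_exp_mul_lintegral_le_fiberIntegral_zero_mul [Nontrivial X]
    (hF : IsNormalizedLogConcave F) (hI : ∫⁻ v, F v ∂(μ.prod ν) ≠ ∞)
    (hfst : Integrable (Prod.fst : Z × X → Z) ((μ.prod ν).withDensity F))
    (hcentered : ∫ v, v.1 ∂(μ.prod ν).withDensity F = 0) {β : ℝ} (hβ₀ : 0 < β) (hβ₁ : β ≤ 1) :
    ENNReal.ofReal (Real.exp (-(2 * β * Module.finrank ℝ (Z × X)) - 1)) *
        ∫⁻ v, F v ∂(μ.prod ν) ≤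
      2 ^ (Module.finrank ℝ X + 1) * fiberIntegral ν (fun v => F v ^ β) 0 *
        ∫⁻ z, fiberSup F z ∂μ := by
  obtain ⟨s, hs, hmem⟩ := hF.exists_zero_mem_closure_logHypograph μ ν hI hfst hcentered hβ₀ hβ₁
  have hexp := (hF.rpow hβ₀.le).ofReal_exp_le_of_mem_closure_logHypograph ν _ hmem
  calc _ ≤ ENNReal.ofReal (Real.exp (s - 1)) * ∫⁻ v, F v ∂(μ.prod ν) := by gcongr
    _ ≤ (∫⁻ z, fiberSup F z ∂μ) / (∫⁻ v, F v ∂(μ.prod ν)) * (2 ^ (Module.finrank ℝ X + 1) *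
        fiberIntegral ν (fun v => F v ^ β) 0) * ∫⁻ v, F v ∂(μ.prod ν) := by gcongr
    _ = _ := by
      rw [mul_right_comm, ENNReal.div_mul_cancel (hF.lintegral_ne_zero _) hI, mul_comm]

end Haar

end IsNormalizedLogConcave

/-! ### Comparing correlations with a central fibre -/

theorem le_ofReal_mul_of_ofReal_mul_le {c d A : ℝ} (hc : 0 < c) (hd : d ≤ c * A) {p q : ℝ≥0∞}
    (hle : ENNReal.ofReal c * p ≤ ENNReal.ofReal d * q) : p ≤ ENNReal.ofReal A * q := by
  rw [← ENNReal.mul_le_mul_iff_right (ENNReal.ofReal_pos.2 hc).ne' ENNReal.ofReal_ne_top,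
    ← mul_assoc, ← ENNReal.ofReal_mul hc.le]
  exact hle.trans (by gcongr)

theorem div_two_le_one_sub_exp_neg {β : ℝ} (hβ₀ : 0 ≤ β) (hβ₁ : β ≤ 1) :
    β / 2 ≤ 1 - Real.exp (-β) := by
  have hexp : Real.exp (-β) ≤ (1 + β)⁻¹ := by
    rw [Real.exp_neg]
    exact inv_anti₀ (by linarith) (by linarith [Real.add_one_le_exp β])
  have hinv : (1 + β)⁻¹ ≤ 1 - β / 2 := by
    rw [inv_le_iff_one_le_mul₀ (by linarith)]
    nlinarith
  linarith

theorem four_pow_mul_two_pow_le {β : ℝ} (hβ₀ : 0 < β) (hβ₁ : β ≤ 1) {k m : ℕ} (hk : 1 ≤ k)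
    (hm : β * m = k) :
    (4 : ℝ) ^ k * 2 ^ (k + 1) ≤ Real.exp (-β) ^ m * (1 - Real.exp (-β)) ^ k *
      Real.exp (-(2 * β * m) - 1) * β ^ k * (32 * Real.exp 4 * β⁻¹ ^ 2) ^ k := by
  have hk' : (1 : ℝ) ≤ k := by exact_mod_cast hk
  have htwo : (2 : ℝ) ^ (k + 1) ≤ 4 ^ k := by
    rw [show (4 : ℝ) = 2 ^ 2 by norm_num, ← pow_mul]
    exact pow_le_pow_right₀ one_le_two (by omega)
  have hexp_m : Real.exp (-β) ^ m = Real.exp (-1) ^ k := by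
    rw [← Real.exp_nat_mul, ← Real.exp_nat_mul]
    congr 1
    linarith
  have hexp_k : Real.exp (-3) ^ k ≤ Real.exp (-(2 * β * m) - 1) := by
    rw [← Real.exp_nat_mul]
    exact Real.exp_le_exp.2 (by linarith)
  have hbase : (4 : ℝ) * 4 =
      Real.exp (-1) * (β / 2) * Real.exp (-3) * β * (32 * Real.exp 4 * β⁻¹ ^ 2) := by
    have hone : Real.exp (-1) * Real.exp (-3) * Real.exp 4 = 1 := by
      rw [← Real.exp_add, ← Real.exp_add]; norm_num
    have hcancel : β * β⁻¹ = 1 := mul_inv_cancel₀ hβ₀.ne'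
    calc (4 : ℝ) * 4 = 16 * (Real.exp (-1) * Real.exp (-3) * Real.exp 4) * (β * β⁻¹) ^ 2 := by
          rw [hone, hcancel]; norm_num
      _ = _ := by ring
  calc (4 : ℝ) ^ k * 2 ^ (k + 1) ≤ 4 ^ k * 4 ^ k := by gcongr
    _ = Real.exp (-1) ^ k * (β / 2) ^ k * Real.exp (-3) ^ k * β ^ k *
        (32 * Real.exp 4 * β⁻¹ ^ 2) ^ k := by rw [← mul_pow, hbase]; simp only [mul_pow]
    _ ≤ _ := by
        have hhalf := div_two_le_one_sub_exp_neg hβ₀.le hβ₁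
        have hone_sub : 0 ≤ 1 - Real.exp (-β) := (half_pos hβ₀).le.trans hhalf
        rw [hexp_m]
        gcongr

namespace IsNormalizedLogConcave

variable {Z X : Type*} [NormedAddCommGroup Z] [NormedSpace ℝ Z] [FiniteDimensional ℝ Z]
  [MeasurableSpace Z] [BorelSpace Z] [NormedAddCommGroup X] [NormedSpace ℝ X]
  [FiniteDimensional ℝ X] [MeasurableSpace X] [BorelSpace X] [Nontrivial X] {F : Z × X → ℝ≥0∞}
  (μ : Measure Z) [μ.IsAddHaarMeasure] (ν : Measure X) [ν.IsAddHaarMeasure]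

theorem mul_lintegral_supCorrelation_sqrt_le (hF : IsNormalizedLogConcave F)
    (hI : ∫⁻ v, F v ∂(μ.prod ν) ≠ ∞)
    (hfst : Integrable (Prod.fst : Z × X → Z) ((μ.prod ν).withDensity F))
    (hcentered : ∫ v, v.1 ∂(μ.prod ν).withDensity F = 0) {β : ℝ} (hβ₀ : 0 < β) (hβ₁ : β ≤ 1)
    {t : ℝ} (ht₀ : 0 < t) (ht₁ : t < 1) :
    ENNReal.ofReal (t ^ Module.finrank ℝ (Z × X)) * ENNReal.ofReal ((1 - t) ^ Module.finrank ℝ X) *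
        ENNReal.ofReal (Real.exp (-(2 * β * Module.finrank ℝ (Z × X)) - 1)) *
        ENNReal.ofReal (β ^ Module.finrank ℝ X) *
        ∫⁻ x, supCorrelation (fun v => F v ^ (1 / 2 : ℝ)) (0, x) ∂ν ≤
      4 ^ Module.finrank ℝ X * 2 ^ (Module.finrank ℝ X + 1) * ∫⁻ x, F (0, x) ∂ν := by
  have hG := hF.rpow (β := 1 / 2) (by norm_num)
  have hcorr := hG.logConcave.lintegral_supCorrelation_le hG.le_one hG.measurable μ ν ht₀ ht₁
  simp only [ennreal_rpow_half_sq] at hcorr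
  have hprojection := hF.lintegral_fiberIntegral_sqrt_sq_mul_le μ ν
  have hcentral := hF.ofReal_exp_mul_lintegral_le_fiberIntegral_zero_mul μ ν hI hfst hcentered
    hβ₀ hβ₁
  have hslice := (hF.comp_continuousLinearMap
    (ContinuousLinearMap.inr ℝ Z X)).ofReal_pow_mul_lintegral_rpow_le ν hβ₀ hβ₁
  simp only [ContinuousLinearMap.inr_apply] at hslice
  have hP₀ := hF.lintegral_fiberSup_ne_zero μ
  have hP := hF.lintegral_fiberSup_ne_top μ ν hI
  have hI₀ := hF.lintegral_ne_zero (μ.prod ν)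
  set I := ∫⁻ v, F v ∂(μ.prod ν)
  set P := ∫⁻ z, fiberSup F z ∂μ
  set S := ∫⁻ x, supCorrelation (fun v => F v ^ (1 / 2 : ℝ)) (0, x) ∂ν
  rw [← ENNReal.mul_le_mul_iff_left (c := I ^ 2 * P) (mul_ne_zero (pow_ne_zero 2 hI₀) hP₀)
    (ENNReal.mul_ne_top (ENNReal.pow_ne_top hI) hP)]
  set a := ENNReal.ofReal (t ^ Module.finrank ℝ (Z × X))
  set b := ENNReal.ofReal ((1 - t) ^ Module.finrank ℝ X)
  set e := ENNReal.ofReal (Real.exp (-(2 * β * Module.finrank ℝ (Z × X)) - 1))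
  set d := ENNReal.ofReal (β ^ Module.finrank ℝ X)
  set h₀ := fiberIntegral ν (fun v => F v ^ β) 0
  calc a * b * e * d * S * (I ^ 2 * P) = a * b * I * S * P * (e * I) * d := by ring
    _ ≤ (∫⁻ z, fiberIntegral ν (fun v => F v ^ (1 / 2 : ℝ)) z ^ 2 ∂μ) * P *
        (2 ^ (Module.finrank ℝ X + 1) * h₀ * P) * d := by gcongr
    _ ≤ 4 ^ Module.finrank ℝ X * I ^ 2 * (2 ^ (Module.finrank ℝ X + 1) * h₀ * P) * d := by gcongr
    _ = 4 ^ Module.finrank ℝ X * 2 ^ (Module.finrank ℝ X + 1) * (d * h₀) * (I ^ 2 * P) := by ring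
    _ ≤ 4 ^ Module.finrank ℝ X * 2 ^ (Module.finrank ℝ X + 1) * (∫⁻ x, F (0, x) ∂ν) *
        (I ^ 2 * P) := by gcongr; exact hslice

theorem lintegral_supCorrelation_sqrt_le (hF : IsNormalizedLogConcave F)
    (hI : ∫⁻ v, F v ∂(μ.prod ν) ≠ ∞)
    (hfst : Integrable (Prod.fst : Z × X → Z) ((μ.prod ν).withDensity F))
    (hcentered : ∫ v, v.1 ∂(μ.prod ν).withDensity F = 0) :
    ∫⁻ x, supCorrelation (fun v => F v ^ (1 / 2 : ℝ)) (0, x) ∂ν ≤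
      ENNReal.ofReal ((32 * Real.exp 4 * ((Module.finrank ℝ (Z × X) : ℝ) / Module.finrank ℝ X) ^ 2)
        ^ Module.finrank ℝ X) * ∫⁻ x, F (0, x) ∂ν := by
  have hk : 1 ≤ Module.finrank ℝ X := Module.finrank_pos
  have hkm : Module.finrank ℝ X ≤ Module.finrank ℝ (Z × X) := by simp
  have hk' : (0 : ℝ) < Module.finrank ℝ X := by exact_mod_cast hk
  have hkm' : (Module.finrank ℝ X : ℝ) ≤ Module.finrank ℝ (Z × X) := by exact_mod_cast hkm
  have hm' := hk'.trans_le hkm'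
  set β : ℝ := Module.finrank ℝ X / Module.finrank ℝ (Z × X) with hβ
  have hβ₀ : 0 < β := by positivity
  have hβ₁ : β ≤ 1 := (div_le_one hm').2 hkm'
  have hconst := four_pow_mul_two_pow_le hβ₀ hβ₁ hk (div_mul_cancel₀ _ hm'.ne')
  have hone_sub : 0 < 1 - Real.exp (-β) :=
    (half_pos hβ₀).trans_le (div_two_le_one_sub_exp_neg hβ₀.le hβ₁)
  have hmain := hF.mul_lintegral_supCorrelation_sqrt_le μ ν hI hfst hcentered hβ₀ hβ₁
    (Real.exp_pos (-β)) (by linarith)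
  rw [← inv_div (Module.finrank ℝ X : ℝ), ← hβ]
  refine le_ofReal_mul_of_ofReal_mul_le (by positivity) hconst ?_
  have hofReal : ENNReal.ofReal ((4 : ℝ) ^ Module.finrank ℝ X * 2 ^ (Module.finrank ℝ X + 1)) =
      4 ^ Module.finrank ℝ X * 2 ^ (Module.finrank ℝ X + 1) := by
    simp [ENNReal.ofReal_mul, ENNReal.ofReal_pow]
  rwa [hofReal, ENNReal.ofReal_mul (by positivity), ENNReal.ofReal_mul (by positivity),
    ENNReal.ofReal_mul (by positivity)]

end IsNormalizedLogConcave

/-! ### Centered densities -/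

/-- `F` is an integrable density with respect to `μ` whose barycenter exists and is the origin. -/
structure IsCenteredDensity {V : Type*} [NormedAddCommGroup V] [NormedSpace ℝ V]
    [MeasurableSpace V] (μ : Measure V) (F : V → ℝ≥0∞) : Prop where
  lintegral_ne_top : ∫⁻ x, F x ∂μ ≠ ∞
  integrable_id : Integrable (fun x => x) (μ.withDensity F)
  integral_id : ∫ x, x ∂μ.withDensity F = 0

theorem exists_withDensity_comp_continuousLinearEquiv {V W : Type*} [NormedAddCommGroup V]
    [NormedSpace ℝ V] [FiniteDimensional ℝ V] [MeasurableSpace V] [BorelSpace V]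
    [NormedAddCommGroup W] [NormedSpace ℝ W] [MeasurableSpace W] [BorelSpace W]
    (μ : Measure V) [μ.IsAddHaarMeasure] (ρ : Measure W) [ρ.IsAddHaarMeasure] {F : V → ℝ≥0∞}
    (hF : Measurable F) (T : W ≃L[ℝ] V) :
    ∃ c : NNReal, (ρ.withDensity fun w => F (T w)).map T = c • μ.withDensity F := by
  have hT : Measurable T := T.continuous.measurable
  have hHaar : (ρ.map T).IsAddHaarMeasure := T.isAddHaarMeasure_map ρ
  obtain ⟨c, hc⟩ : ∃ c : NNReal, ρ.map T = c • μ := ⟨_, Measure.isAddLeftInvariant_eq_smul _ _⟩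
  have hmap : (ρ.withDensity fun w => F (T w)).map T = (ρ.map T).withDensity F := by
    ext s hs
    rw [Measure.map_apply hT hs, withDensity_apply _ (hT hs), withDensity_apply _ hs,
      setLIntegral_map hs hF hT]
  exact ⟨c, by rw [hmap, hc]; exact withDensity_smul_measure (c : ℝ≥0∞) F⟩

namespace IsCenteredDensity

variable {V W : Type*} [NormedAddCommGroup V] [NormedSpace ℝ V] [MeasurableSpace V]
  [NormedAddCommGroup W] [NormedSpace ℝ W] [MeasurableSpace W] {μ : Measure V} {ν : Measure W}
  {F : V → ℝ≥0∞} {G : W → ℝ≥0∞}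

theorem isFiniteMeasure (h : IsCenteredDensity μ F) : IsFiniteMeasure (μ.withDensity F) :=
  isFiniteMeasure_withDensity h.lintegral_ne_top

theorem prod [CompleteSpace V] [CompleteSpace W] [SFinite μ] [SFinite ν]
    (hμ : IsCenteredDensity μ F) (hν : IsCenteredDensity ν G) (hF : Measurable F)
    (hG : Measurable G) : IsCenteredDensity (μ.prod ν) fun v => F v.1 * G v.2 := by
  have := hμ.isFiniteMeasure
  have := hν.isFiniteMeasure
  have hfst := hμ.integrable_id.comp_fst (ν.withDensity G)
  have hsnd := hν.integrable_id.comp_snd (μ.withDensity F)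
  refine ⟨?_, ?_, ?_⟩
  · rw [lintegral_prod_mul hF.aemeasurable hG.aemeasurable]
    exact ENNReal.mul_ne_top hμ.lintegral_ne_top hν.lintegral_ne_top
  · rw [← prod_withDensity hF hG]
    exact hfst.prodMk hsnd
  · rw [← prod_withDensity hF hG]
    have hpair := integral_pair hfst hsnd
    rw [integral_fun_fst (fun x => x), integral_fun_snd (fun x => x), hμ.integral_id,
      hν.integral_id, smul_zero, smul_zero] at hpair
    exact hpair

theorem comp_continuousLinearEquiv [FiniteDimensional ℝ V] [BorelSpace V] [BorelSpace W]
    [μ.IsAddHaarMeasure] [ν.IsAddHaarMeasure] (h : IsCenteredDensity μ F) (hF : Measurable F)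
    (T : W ≃L[ℝ] V) : IsCenteredDensity ν fun w => F (T w) := by
  have := T.toLinearEquiv.symm.finiteDimensional
  have := h.isFiniteMeasure
  have hT : MeasurableEmbedding T := T.toHomeomorph.measurableEmbedding
  obtain ⟨c, hc⟩ := exists_withDensity_comp_continuousLinearEquiv μ ν hF T
  refine ⟨?_, ?_, ?_⟩
  · have huniv := congrArg (fun κ : Measure V => κ univ) hc
    rw [hT.map_apply, preimage_univ, withDensity_apply _ .univ, setLIntegral_univ] at huniv
    rw [huniv]
    exact measure_ne_top _ _
  · have hsymm : Integrable (fun v => T.symm v) ((ν.withDensity fun w => F (T w)).map T) := by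
      rw [hc]
      exact (T.symm.toContinuousLinearMap.integrable_comp h.integrable_id).smul_measure_nnreal
    simpa [Function.comp_def] using hT.integrable_map_iff.1 hsymm
  · calc ∫ w, w ∂ν.withDensity (fun w => F (T w))
        = ∫ v, T.symm v ∂(ν.withDensity fun w => F (T w)).map T := by simp [hT.integral_map]
      _ = c • T.symm (∫ v, v ∂μ.withDensity F) := by
        rw [hc, integral_smul_nnreal_measure]
        exact congrArg _ (T.symm.toContinuousLinearMap.integral_comp_comm h.integrable_id)
      _ = 0 := by rw [h.integral_id, map_zero, smul_zero]

end IsCenteredDensity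

/-! ### Integrable log-concave functions -/

theorem tendsto_measure_ball_cocompact {V : Type*} [NormedAddCommGroup V] [NormedSpace ℝ V]
    [FiniteDimensional ℝ V] [MeasurableSpace V] [BorelSpace V] (κ : Measure V) [IsFiniteMeasure κ]
    (r : ℝ) : Filter.Tendsto (fun x => κ (ball x r)) (Filter.cocompact V) (nhds 0) := by
  have htight := tendsto_measure_compl_closedBall_of_isTightMeasureSet
    (isTightMeasureSet_singleton (μ := κ)) (0 : V)
  simp only [mem_singleton_iff, iSup_iSup_eq_left] at htight
  have hradius : Filter.Tendsto (fun x : V => ‖x‖ - r) (Filter.cocompact V) Filter.atTop :=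
    Filter.tendsto_atTop_add_const_right _ (-r) (tendsto_norm_cocompact_atTop (E := V))
  refine tendsto_of_tendsto_of_tendsto_of_le_of_le tendsto_const_nhds (htight.comp hradius)
    (fun _ => zero_le) fun x => measure_mono fun y hy => ?_
  rw [mem_ball, dist_eq_norm, norm_sub_rev] at hy
  rw [mem_compl_iff, mem_closedBall_zero_iff, not_le]
  linarith [norm_sub_norm_le x y]

theorem negMulLog_le_two_mul_sqrt {u : ℝ} (hu : 0 ≤ u) :
    Real.negMulLog u ≤ 2 * u ^ (1 / 2 : ℝ) := by
  have hs := Real.sqrt_nonneg u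
  calc Real.negMulLog u = 2 * (√u * Real.negMulLog √u) := by
        conv_lhs => rw [← Real.mul_self_sqrt hu, Real.negMulLog_mul, ← two_mul]
    _ ≤ 2 * (√u * 1) := by
        gcongr
        exact (Real.negMulLog_le_one_sub_self hs).trans (by linarith)
    _ = 2 * u ^ (1 / 2 : ℝ) := by rw [mul_one, Real.sqrt_eq_rpow]

namespace IsLogConcave

section Support

variable {V : Type*} [NormedAddCommGroup V] [NormedSpace ℝ V] {f : V → ℝ}

theorem convex_setOf_pos (hf : IsLogConcave f) : Convex ℝ {x | 0 < f x} := by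
  intro x (hx : 0 < f x) y (hy : 0 < f y) a b ha hb hab
  exact lt_of_lt_of_le (by positivity) (hf x y a b ha hb hab)

theorem concaveOn_log (hf : IsLogConcave f) :
    ConcaveOn ℝ {x | 0 < f x} fun x => Real.log (f x) := by
  refine ⟨hf.convex_setOf_pos, fun x (hx : 0 < f x) y (hy : 0 < f y) a b ha hb hab => ?_⟩
  calc a • Real.log (f x) + b • Real.log (f y) = Real.log (f x ^ a * f y ^ b) := by
        rw [Real.log_mul (by positivity) (by positivity), Real.log_rpow hx, Real.log_rpow hy,
          smul_eq_mul, smul_eq_mul]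
    _ ≤ Real.log (f (a • x + b • y)) :=
        Real.log_le_log (by positivity) (hf x y a b ha hb hab)

theorem continuousOn_interior_setOf_pos [FiniteDimensional ℝ V] (hf : IsLogConcave f) :
    ContinuousOn f (interior {x | 0 < f x}) :=
  hf.concaveOn_log.continuousOn_interior.rexp.congr fun _ hx =>
    (Real.exp_log (interior_subset hx : _ ∈ {x | 0 < f x})).symm

theorem rpow_le_map_smul (hf : IsLogConcave f) (hf₀ : f 0 = 1) (x : V) {t : ℝ} (ht₀ : 0 ≤ t)
    (ht₁ : t ≤ 1) : f x ^ t ≤ f (t • x) := by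
  simpa [hf₀] using hf x 0 t (1 - t) ht₀ (by linarith) (by ring)

theorem sqrt_mul_sqrt_le_of_mem_ball (hf : IsLogConcave f) (hf_nonneg : ∀ x, 0 ≤ f x) {b : V}
    {r δ : ℝ} (hδ : 0 ≤ δ) (hball : ∀ z ∈ ball b r, δ ≤ f z) {x y : V}
    (hy : y ∈ ball ((1 / 2 : ℝ) • (x + b)) (r / 2)) :
    f x ^ (1 / 2 : ℝ) * δ ^ (1 / 2 : ℝ) ≤ f y := by
  have hmem : (2 : ℝ) • y - x ∈ ball b r := by
    have hdouble : (2 : ℝ) • y - x - b = (2 : ℝ) • (y - (1 / 2 : ℝ) • (x + b)) := by module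
    rw [mem_ball, dist_eq_norm] at hy ⊢
    rw [hdouble, norm_smul, Real.norm_two]
    linarith
  have hmid := hf x ((2 : ℝ) • y - x) (1 / 2) (1 / 2) (by norm_num) (by norm_num) (by norm_num)
  rw [show (1 / 2 : ℝ) • x + (1 / 2 : ℝ) • ((2 : ℝ) • y - x) = y by module] at hmid
  refine le_trans ?_ hmid
  exact mul_le_mul_of_nonneg_left (Real.rpow_le_rpow hδ (hball _ hmem) (by norm_num))
    (Real.rpow_nonneg (hf_nonneg x) _)

theorem norm_le_mul_neg_log (hf : IsLogConcave f) (hf₀ : f 0 = 1) {R : ℝ} (hR : 0 < R)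
    (hdecay : ∀ x, R ≤ ‖x‖ → f x ≤ Real.exp (-1)) {x : V} (hx : R ≤ ‖x‖) (hfx : 0 < f x) :
    ‖x‖ ≤ R * -Real.log (f x) := by
  have hx₀ : 0 < ‖x‖ := hR.trans_le hx
  have hnorm : ‖(R / ‖x‖) • x‖ = R := by
    rw [norm_smul, Real.norm_of_nonneg (by positivity), div_mul_cancel₀ _ hx₀.ne']
  have hle := Real.log_le_log (by positivity)
    ((hf.rpow_le_map_smul hf₀ x (by positivity) (div_le_one_of_le₀ hx hx₀.le)).trans
      (hdecay _ hnorm.ge))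
  rw [Real.log_rpow hfx, Real.log_exp, div_mul_eq_mul_div, div_le_iff₀ hx₀] at hle
  linarith

theorem norm_smul_le_mul_add (hf : IsLogConcave f) (hf_nonneg : ∀ x, 0 ≤ f x) (hf₀ : f 0 = 1)
    {R : ℝ} (hR : 0 < R) (hdecay : ∀ x, R ≤ ‖x‖ → f x ≤ Real.exp (-1)) (x : V) :
    ‖f x • x‖ ≤ R * (f x + 2 * f ((1 / 2 : ℝ) • x)) := by
  have hfx := hf_nonneg x
  have hhalf := hf_nonneg ((1 / 2 : ℝ) • x)
  rw [norm_smul, Real.norm_of_nonneg hfx]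
  rcases hfx.eq_or_lt with hzero | hfx_pos
  · rw [← hzero, zero_mul]
    positivity
  rcases le_total ‖x‖ R with hx | hx
  · calc f x * ‖x‖ ≤ f x * R := by gcongr
      _ ≤ R * (f x + 2 * f ((1 / 2 : ℝ) • x)) := by nlinarith [mul_nonneg hR.le hhalf]
  calc f x * ‖x‖ ≤ f x * (R * -Real.log (f x)) := by
        gcongr
        exact hf.norm_le_mul_neg_log hf₀ hR hdecay hx hfx_pos
    _ = R * Real.negMulLog (f x) := by rw [Real.negMulLog]; ring
    _ ≤ R * (2 * f ((1 / 2 : ℝ) • x)) := by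
        gcongr
        exact (negMulLog_le_two_mul_sqrt hfx).trans
          (by gcongr; exact hf.rpow_le_map_smul hf₀ x (by norm_num) (by norm_num))
    _ ≤ R * (f x + 2 * f ((1 / 2 : ℝ) • x)) := by gcongr; linarith

end Support

variable {V : Type*} [NormedAddCommGroup V] [NormedSpace ℝ V] [FiniteDimensional ℝ V]
  [MeasurableSpace V] [BorelSpace V] {μ : Measure V} [μ.IsAddHaarMeasure] {f : V → ℝ}

theorem ae_mem_interior_or_eq_zero (hf : IsLogConcave f) (hf_nonneg : ∀ x, 0 ≤ f x) :
    ∀ᵐ x ∂μ, x ∈ interior {x | 0 < f x} ∨ f x = 0 := by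
  filter_upwards [measure_eq_zero_iff_ae_notMem.1 (hf.convex_setOf_pos.addHaar_frontier μ)]
    with x hx
  by_contra! hx'
  exact hx ⟨subset_closure ((hf_nonneg x).lt_of_ne' hx'.2), hx'.1⟩

theorem nonempty_interior_setOf_pos (hf : IsLogConcave f) (hf_nonneg : ∀ x, 0 ≤ f x)
    (hpos : 0 < ∫ x, f x ∂μ) : (interior {x | 0 < f x}).Nonempty := by
  by_contra hempty
  rw [not_nonempty_iff_eq_empty] at hempty
  refine hpos.ne' (integral_eq_zero_of_ae ?_)
  filter_upwards [hf.ae_mem_interior_or_eq_zero (μ := μ) hf_nonneg] with x hx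
  simpa [hempty] using hx

theorem eventually_cocompact_lt (hf : IsLogConcave f) (hf_nonneg : ∀ x, 0 ≤ f x)
    (hint : Integrable f μ) (hpos : 0 < ∫ x, f x ∂μ) {ε : ℝ} (hε : 0 < ε) :
    ∀ᶠ x in Filter.cocompact V, f x < ε := by
  obtain ⟨b, hb⟩ := hf.nonempty_interior_setOf_pos hf_nonneg hpos
  have hfb : 0 < f b := (interior_subset hb : b ∈ {x | 0 < f x})
  obtain ⟨r, hr, hball⟩ := Metric.eventually_nhds_iff_ball.1 <|
    (hf.continuousOn_interior_setOf_pos.continuousAt (isOpen_interior.mem_nhds hb)).eventually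
      (lt_mem_nhds (half_lt_self hfb))
  set κ := μ.withDensity fun x => ENNReal.ofReal (f x)
  have : IsFiniteMeasure κ := isFiniteMeasure_withDensity_ofReal hint.2
  have hmidpoint : Filter.Tendsto (fun x => (1 / 2 : ℝ) • (x + b)) (Filter.cocompact V)
      (Filter.cocompact V) :=
    ((Homeomorph.addRight b).trans (Homeomorph.smulOfNeZero (1 / 2 : ℝ)
      (by norm_num))).isClosedEmbedding.tendsto_cocompact
  set c := ENNReal.ofReal (ε ^ (1 / 2 : ℝ) * (f b / 2) ^ (1 / 2 : ℝ)) * μ (ball 0 (r / 2))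
  have hc : 0 < c := ENNReal.mul_pos (ENNReal.ofReal_pos.2 (by positivity)).ne'
    (measure_ball_pos μ 0 (by positivity)).ne'
  filter_upwards [((tendsto_measure_ball_cocompact κ (r / 2)).comp hmidpoint).eventually
    (gt_mem_nhds hc)] with x hx
  by_contra! hεx
  refine hx.not_ge ?_
  simp only [Function.comp_apply, κ, c]
  rw [withDensity_apply _ measurableSet_ball,
    ← Measure.addHaar_ball_center μ ((1 / 2 : ℝ) • (x + b)) (r / 2), ← setLIntegral_const]
  refine setLIntegral_mono' measurableSet_ball fun y hy => ENNReal.ofReal_le_ofReal ?_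
  have hy' := hf.sqrt_mul_sqrt_le_of_mem_ball hf_nonneg (by positivity)
    (fun z hz => (hball z hz).le) hy
  exact le_trans (by gcongr) hy'

theorem integrable_smul_id (hf : IsLogConcave f) (hf_nonneg : ∀ x, 0 ≤ f x) (hf₀ : f 0 = 1)
    (hint : Integrable f μ) (hpos : 0 < ∫ x, f x ∂μ) : Integrable (fun x => f x • x) μ := by
  obtain ⟨R, hR, hdecay⟩ : ∃ R : ℝ, 0 < R ∧ ∀ x, R ≤ ‖x‖ → f x ≤ Real.exp (-1) := by
    have hlt := hf.eventually_cocompact_lt hf_nonneg hint hpos (Real.exp_pos (-1))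
    rw [← cobounded_eq_cocompact, Filter.hasBasis_cobounded_norm.eventually_iff] at hlt
    obtain ⟨R, -, hR⟩ := hlt
    exact ⟨max R 1, by positivity, fun x hx => (hR (le_of_max_le_left hx)).le⟩
  exact ((hint.add ((hint.comp_smul (by norm_num)).const_mul 2)).const_mul R).mono'
    (hint.1.smul aestronglyMeasurable_id)
    (.of_forall fun x => hf.norm_smul_le_mul_add hf_nonneg hf₀ hR hdecay x)

theorem zero_mem_interior_setOf_pos (hf : IsLogConcave f) (hf_nonneg : ∀ x, 0 ≤ f x)
    (hpos : 0 < ∫ x, f x ∂μ) (hsmul : Integrable (fun x => f x • x) μ)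
    (hcentered : ∫ x, f x • x ∂μ = 0) : (0 : V) ∈ interior {x | 0 < f x} := by
  by_contra hzero
  obtain ⟨l, hl⟩ := geometric_hahn_banach_open_point hf.convex_setOf_pos.interior
    isOpen_interior hzero
  simp only [map_zero] at hl
  have hint : Integrable (fun x => -(f x * l x)) μ := by
    simpa using (l.integrable_comp hsmul).neg
  have hintegral : ∫ x, -(f x * l x) ∂μ = 0 := by
    simpa [integral_neg, hcentered] using l.integral_comp_comm hsmul
  have hnonneg : 0 ≤ᵐ[μ] fun x => -(f x * l x) := by
    filter_upwards [hf.ae_mem_interior_or_eq_zero hf_nonneg] with x hx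
    rcases hx with hx | hx
    · exact neg_nonneg.2 (mul_nonpos_of_nonneg_of_nonpos (hf_nonneg x) (hl x hx).le)
    · simp [hx]
  have hnull : μ (interior {x | 0 < f x}) = 0 := by
    refine measure_mono_null (fun x hx => ?_)
      (ae_iff.1 ((integral_eq_zero_iff_of_nonneg_ae hnonneg hint).1 hintegral))
    have hfx : 0 < f x := (interior_subset hx : x ∈ {x | 0 < f x})
    exact (neg_pos.2 (mul_neg_of_pos_of_neg hfx (hl x hx))).ne'
  exact (isOpen_interior.measure_pos μ (hf.nonempty_interior_setOf_pos hf_nonneg hpos)).ne' hnull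

end IsLogConcave

/-- `f` cut off outside the interior of `{x | 0 < f x}`. For log-concave `f` this only changes the
values on a null set, and it makes `f` lower semicontinuous. -/
def openSupportPart {V : Type*} [TopologicalSpace V] (f : V → ℝ) : V → ℝ≥0∞ :=
  (interior {x | 0 < f x}).indicator fun x => ENNReal.ofReal (f x)

theorem openSupportPart_le {V : Type*} [TopologicalSpace V] (f : V → ℝ) (x : V) :
    openSupportPart f x ≤ ENNReal.ofReal (f x) :=
  indicator_le_self _ _ x

theorem openSupportPart_of_mem {V : Type*} [TopologicalSpace V] {f : V → ℝ} {x : V}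
    (hx : x ∈ interior {x | 0 < f x}) : openSupportPart f x = ENNReal.ofReal (f x) :=
  indicator_of_mem hx _

theorem openSupportPart_of_notMem {V : Type*} [TopologicalSpace V] {f : V → ℝ} {x : V}
    (hx : x ∉ interior {x | 0 < f x}) : openSupportPart f x = 0 :=
  indicator_of_notMem hx _

namespace IsLogConcave

section Regularity

variable {V : Type*} [NormedAddCommGroup V] [NormedSpace ℝ V] {f : V → ℝ}

theorem lowerSemicontinuous_openSupportPart [FiniteDimensional ℝ V] (hf : IsLogConcave f) :
    LowerSemicontinuous (openSupportPart f) := by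
  intro x c hc
  by_cases hx : x ∈ interior {x | 0 < f x}
  · have hcont : ContinuousOn (openSupportPart f) (interior {x | 0 < f x}) :=
      (ENNReal.continuous_ofReal.comp_continuousOn hf.continuousOn_interior_setOf_pos).congr
        fun _ => openSupportPart_of_mem
    exact (hcont.continuousAt (isOpen_interior.mem_nhds hx)).lowerSemicontinuousAt c hc
  · simp [openSupportPart_of_notMem hx] at hc

theorem isLogConcave_openSupportPart (hf : IsLogConcave f) (hf_nonneg : ∀ x, 0 ≤ f x) :
    IsLogConcave (openSupportPart f) := by
  intro x y a b ha hb hab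
  rcases ha.eq_or_lt with rfl | ha_pos
  · simp [(zero_add b).symm.trans hab]
  rcases hb.eq_or_lt with rfl | hb_pos
  · simp [(add_zero a).symm.trans hab]
  by_cases hx : x ∈ interior {x | 0 < f x}
  swap
  · simp [openSupportPart_of_notMem hx, ha_pos]
  by_cases hy : y ∈ interior {x | 0 < f x}
  swap
  · simp [openSupportPart_of_notMem hy, hb_pos]
  rw [openSupportPart_of_mem hx, openSupportPart_of_mem hy,
    openSupportPart_of_mem (hf.convex_setOf_pos.interior hx hy ha hb hab),
    ENNReal.ofReal_rpow_of_nonneg (hf_nonneg x) ha, ENNReal.ofReal_rpow_of_nonneg (hf_nonneg y) hb,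
    ← ENNReal.ofReal_mul (Real.rpow_nonneg (hf_nonneg x) _)]
  exact ENNReal.ofReal_le_ofReal (hf x y a b ha hb hab)

theorem isNormalizedLogConcave_openSupportPart [FiniteDimensional ℝ V] (hf : IsLogConcave f)
    (hf_nonneg : ∀ x, 0 ≤ f x) (hf_le : ∀ x, f x ≤ 1) (hf₀ : f 0 = 1)
    (hzero : (0 : V) ∈ interior {x | 0 < f x}) : IsNormalizedLogConcave (openSupportPart f) where
  le_one x := (openSupportPart_le f x).trans (ENNReal.ofReal_le_one.2 (hf_le x))
  map_zero := by rw [openSupportPart_of_mem hzero, hf₀, ENNReal.ofReal_one]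
  logConcave := hf.isLogConcave_openSupportPart hf_nonneg
  lowerSemicontinuous := hf.lowerSemicontinuous_openSupportPart

theorem rpow_half_le_openSupportPart_half_smul (hf : IsLogConcave f) (hf_nonneg : ∀ x, 0 ≤ f x)
    (hf₀ : f 0 = 1) (hzero : (0 : V) ∈ interior {x | 0 < f x}) (x : V) :
    ENNReal.ofReal (f x) ^ (1 / 2 : ℝ) ≤ openSupportPart f ((1 / 2 : ℝ) • x) := by
  rcases (hf_nonneg x).eq_or_lt with hfx | hfx
  · simp [← hfx]
  have hhalf : (1 / 2 : ℝ) • x ∈ interior {x | 0 < f x} := by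
    simpa using hf.convex_setOf_pos.combo_self_interior_mem_interior (x := x) (y := 0) hfx hzero
      (a := 1 / 2) (b := 1 / 2) (by norm_num) (by norm_num) (by norm_num)
  rw [openSupportPart_of_mem hhalf, ENNReal.ofReal_rpow_of_pos hfx]
  exact ENNReal.ofReal_le_ofReal (hf.rpow_le_map_smul hf₀ x (by norm_num) (by norm_num))

end Regularity

variable {V : Type*} [NormedAddCommGroup V] [NormedSpace ℝ V] [FiniteDimensional ℝ V]
  [MeasurableSpace V] [BorelSpace V] {μ : Measure V} [μ.IsAddHaarMeasure] {f : V → ℝ}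

theorem toReal_openSupportPart_ae_eq (hf : IsLogConcave f) (hf_nonneg : ∀ x, 0 ≤ f x) :
    (fun x => (openSupportPart f x).toReal) =ᵐ[μ] f := by
  filter_upwards [hf.ae_mem_interior_or_eq_zero (μ := μ) hf_nonneg] with x hx
  by_cases hmem : x ∈ interior {x | 0 < f x}
  · rw [openSupportPart_of_mem hmem, ENNReal.toReal_ofReal (hf_nonneg x)]
  · rw [openSupportPart_of_notMem hmem, hx.resolve_left hmem, ENNReal.toReal_zero]

theorem isCenteredDensity_openSupportPart (hf : IsLogConcave f) (hf_nonneg : ∀ x, 0 ≤ f x)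
    (hint : Integrable f μ) (hsmul : Integrable (fun x => f x • x) μ)
    (hcentered : ∫ x, f x • x ∂μ = 0) : IsCenteredDensity μ (openSupportPart f) := by
  have hmeas : Measurable (openSupportPart f) := hf.lowerSemicontinuous_openSupportPart.measurable
  have hfin : ∀ᵐ x ∂μ, openSupportPart f x < ∞ :=
    .of_forall fun x => (openSupportPart_le f x).trans_lt ENNReal.ofReal_lt_top
  have hae : (fun x => (openSupportPart f x).toReal • x) =ᵐ[μ] fun x => f x • x := by
    filter_upwards [hf.toReal_openSupportPart_ae_eq hf_nonneg] with x hx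
    rw [hx]
  refine ⟨?_, ?_, ?_⟩
  · exact ne_top_of_le_ne_top ((hasFiniteIntegral_iff_ofReal (.of_forall hf_nonneg)).1 hint.2).ne
      (lintegral_mono (openSupportPart_le f))
  · rw [integrable_withDensity_iff_integrable_smul' hmeas hfin]
    exact hsmul.congr hae.symm
  · rw [integral_withDensity_eq_integral_toReal_smul hmeas hfin, integral_congr_ae hae, hcentered]

end IsLogConcave

/-! ### Central sections of a centered log-concave function -/

theorem exists_continuousLinearEquiv_add_sub {V : Type*} [NormedAddCommGroup V]
    [NormedSpace ℝ V] [FiniteDimensional ℝ V] {H K : Submodule ℝ V} (hHK : IsCompl H K) :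
    ∃ T : ((V × K) × H) ≃L[ℝ] V × V, ∀ v, T v = (v.1.1 + v.2, (v.1.2 : V) - v.2) := by
  let L : ((V × K) × H) →ₗ[ℝ] V × V :=
    { toFun := fun v => (v.1.1 + v.2, (v.1.2 : V) - v.2)
      map_add' := fun v w => by ext <;> simp <;> abel
      map_smul' := fun r v => by ext <;> simp [smul_sub] }
  have hinj : Function.Injective L := by
    rw [← LinearMap.ker_eq_bot, LinearMap.ker_eq_bot']
    rintro ⟨⟨u, p⟩, x⟩ hker
    obtain ⟨hux, hpx⟩ := Prod.mk_eq_zero.1 hker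
    have hx : (x : V) = 0 :=
      (Submodule.disjoint_def.1 hHK.disjoint) x x.2 (sub_eq_zero.1 hpx ▸ p.2)
    simp_all
  have hrank : Module.finrank ℝ ((V × K) × H) = Module.finrank ℝ (V × V) := by
    simp only [Module.finrank_prod, ← Submodule.finrank_add_eq_of_isCompl hHK]
    omega
  exact ⟨(L.linearEquivOfInjective hinj hrank).toContinuousLinearEquiv, fun _ => rfl⟩

theorem supCorrelation_coe_le_supCorrelation_sqrt {V : Type*} [AddCommGroup V] [Module ℝ V]
    [TopologicalSpace V] {H K : Submodule ℝ V} (g : V → ℝ≥0∞) (T : ((V × K) × H) ≃L[ℝ] V × V)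
    (hT : ∀ v, T v = (v.1.1 + v.2, (v.1.2 : V) - v.2)) (x : H) :
    supCorrelation g (x : V) ≤
      supCorrelation (fun v => (g (T v).1 * g (T v).2) ^ (1 / 2 : ℝ)) (0, x) := by
  refine iSup_le fun u => le_iSup_of_le (T.symm (u, u - x)) ?_
  have hshift : T (T.symm (u, u - x) - (0, x)) = (u - x, u) := by
    rw [map_sub, T.apply_symm_apply, hT]
    simp
  beta_reduce
  rw [hshift, T.apply_symm_apply, mul_comm (g (u - x)) (g u), ← pow_two, ennreal_rpow_half_sq]

-- The product `g ⊗ g` on `V × V` has the section `g x * g (-x)` along the antidiagonal copy of `H`,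
-- and shifting by `(x, -x)` swaps the two coordinates of `(u, u - x)`.
theorem IsNormalizedLogConcave.lintegral_supCorrelation_coe_le {V : Type*}
    [NormedAddCommGroup V] [NormedSpace ℝ V] [FiniteDimensional ℝ V] [MeasurableSpace V]
    [BorelSpace V] {g : V → ℝ≥0∞} (hg : IsNormalizedLogConcave g) {μ : Measure V}
    [μ.IsAddHaarMeasure] (hcentered : IsCenteredDensity μ g) (H : Submodule ℝ V) [Nontrivial H]
    (ν : Measure H) [ν.IsAddHaarMeasure] :
    ∫⁻ x : H, supCorrelation g (x : V) ∂ν ≤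
      ENNReal.ofReal ((128 * Real.exp 4 * ((Module.finrank ℝ V : ℝ) / Module.finrank ℝ H) ^ 2)
        ^ Module.finrank ℝ H) * ∫⁻ x : H, g x * g (-x) ∂ν := by
  obtain ⟨K, hHK⟩ := H.exists_isCompl
  obtain ⟨T, hT⟩ := exists_continuousLinearEquiv_add_sub hHK
  let ρ : Measure (V × K) := μ.prod Measure.addHaar
  have hρ : (ρ.prod ν).IsAddHaarMeasure := Measure.prod.instIsAddHaarMeasure ρ ν
  have hprod := hg.prod hg
  have hF : IsNormalizedLogConcave fun v => g (T v).1 * g (T v).2 :=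
    hprod.comp_continuousLinearMap T.toContinuousLinearMap
  have hF_centered : IsCenteredDensity (ρ.prod ν) fun v => g (T v).1 * g (T v).2 :=
    (hcentered.prod hcentered hg.measurable hg.measurable).comp_continuousLinearEquiv
      hprod.measurable T
  have hfst := ((ContinuousLinearMap.fst ℝ (V × K) H).integral_comp_comm
    hF_centered.integrable_id).trans (by rw [hF_centered.integral_id, _root_.map_zero])
  have hmain := hF.lintegral_supCorrelation_sqrt_le ρ ν hF_centered.lintegral_ne_top
    hF_centered.integrable_id.fst hfst
  have hrank : (Module.finrank ℝ ((V × K) × H) : ℝ) = 2 * Module.finrank ℝ V := by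
    rw [T.toLinearEquiv.finrank_eq, Module.finrank_prod]
    push_cast
    ring
  have hconst : 32 * Real.exp 4 * (2 * Module.finrank ℝ V / Module.finrank ℝ H : ℝ) ^ 2 =
      128 * Real.exp 4 * ((Module.finrank ℝ V : ℝ) / Module.finrank ℝ H) ^ 2 := by ring
  simp only [hrank, hconst, hT, Prod.fst_zero, Prod.snd_zero, zero_add, ZeroMemClass.coe_zero,
    zero_sub] at hmain
  refine (lintegral_mono fun x => ?_).trans hmain
  simpa only [hT] using supCorrelation_coe_le_supCorrelation_sqrt g T hT x

/-! ### The functional sections inequality -/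

theorem setLIntegral_hausdorffMeasure_eq_lintegral_subtype {X : Type*} [MetricSpace X]
    [MeasurableSpace X] [BorelSpace X] {s : Set X} (hs : MeasurableSet s) {d : ℝ} (hd : 0 ≤ d)
    (q : X → ℝ≥0∞) : ∫⁻ x in s, q x ∂μH[d] = ∫⁻ x : s, q x ∂μH[d] := by
  have hmap := (isometry_subtype_coe (s := s)).map_hausdorffMeasure (d := d) (Or.inl hd)
  rw [Subtype.range_coe] at hmap
  rw [← hmap, (MeasurableEmbedding.subtype_coe hs).lintegral_map]

theorem ofReal_sSup_le {S : Set ℝ} {c : ℝ≥0∞} (hS : ∀ t ∈ S, ENNReal.ofReal t ≤ c) :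
    ENNReal.ofReal (sSup S) ≤ c := by
  rcases eq_or_ne c ∞ with rfl | hc
  · exact le_top
  rw [ENNReal.ofReal_le_iff_le_toReal hc]
  exact Real.sSup_le (fun t ht => (ENNReal.ofReal_le_iff_le_toReal hc).1 (hS t ht))
    ENNReal.toReal_nonneg

theorem IsLogConcave.div_const {V : Type*} [Add V] [SMul ℝ V] {f : V → ℝ} (hf : IsLogConcave f)
    (hf_nonneg : ∀ x, 0 ≤ f x) {c : ℝ} (hc : 0 < c) : IsLogConcave fun x => f x / c := by
  intro x y a b ha hb hab
  calc (f x / c) ^ a * (f y / c) ^ b = f x ^ a * f y ^ b / (c ^ a * c ^ b) := by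
        rw [Real.div_rpow (hf_nonneg x) hc.le, Real.div_rpow (hf_nonneg y) hc.le,
          div_mul_div_comm]
    _ = f x ^ a * f y ^ b / c := by rw [← Real.rpow_add hc, hab, Real.rpow_one]
    _ ≤ f (a • x + b • y) / c := by gcongr; exact hf x y a b ha hb hab

/-- The function `f / f 0`, regularized by `openSupportPart`: the form in which a geometric
log-concave function enters the results on normalized log-concave functions. -/
def normalizedDensity {V : Type*} [Zero V] [TopologicalSpace V] (f : V → ℝ) : V → ℝ≥0∞ :=
  openSupportPart fun x => f x / f 0

namespace IsGeomLogConcave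

variable {n : ℕ} {f : EuclideanSpace ℝ (Fin n) → ℝ}

theorem map_zero_pos (hf : IsGeomLogConcave f) : 0 < f 0 := by
  by_contra! hzero
  have hf_eq : f = 0 := funext fun x =>
    le_antisymm ((hf.maxAtZero x).trans hzero) (hf.nonneg x)
  simpa [hf_eq] using hf.integral_pos

theorem div_nonneg (hf : IsGeomLogConcave f) (x : EuclideanSpace ℝ (Fin n)) : 0 ≤ f x / f 0 :=
  _root_.div_nonneg (hf.nonneg x) hf.map_zero_pos.le

theorem isLogConcave_div (hf : IsGeomLogConcave f) : IsLogConcave fun x => f x / f 0 :=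
  IsLogConcave.div_const hf.logConcave hf.nonneg hf.map_zero_pos

theorem integral_div_pos (hf : IsGeomLogConcave f) : 0 < ∫ x, f x / f 0 := by
  rw [integral_div]
  exact div_pos hf.integral_pos hf.map_zero_pos

theorem integrable_div_smul (hf : IsGeomLogConcave f) : Integrable fun x => (f x / f 0) • x :=
  hf.isLogConcave_div.integrable_smul_id hf.div_nonneg (div_self hf.map_zero_pos.ne')
    (hf.integrable.div_const _) hf.integral_div_pos

theorem integral_div_smul (hf : IsGeomLogConcave f) : ∫ x, (f x / f 0) • x = 0 := by
  simp only [div_eq_inv_mul, mul_smul, integral_smul, hf.centered, smul_zero]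

theorem zero_mem_interior (hf : IsGeomLogConcave f) :
    (0 : EuclideanSpace ℝ (Fin n)) ∈ interior {x | 0 < f x / f 0} :=
  hf.isLogConcave_div.zero_mem_interior_setOf_pos hf.div_nonneg hf.integral_div_pos
    hf.integrable_div_smul hf.integral_div_smul

theorem isNormalizedLogConcave_normalizedDensity (hf : IsGeomLogConcave f) :
    IsNormalizedLogConcave (normalizedDensity f) :=
  hf.isLogConcave_div.isNormalizedLogConcave_openSupportPart hf.div_nonneg
    (fun x => div_le_one_of_le₀ (hf.maxAtZero x) hf.map_zero_pos.le)
    (div_self hf.map_zero_pos.ne') hf.zero_mem_interior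

theorem isCenteredDensity_normalizedDensity (hf : IsGeomLogConcave f) :
    IsCenteredDensity volume (normalizedDensity f) :=
  hf.isLogConcave_div.isCenteredDensity_openSupportPart hf.div_nonneg
    (hf.integrable.div_const _) hf.integrable_div_smul hf.integral_div_smul

theorem ofReal_deltaOut_le (hf : IsGeomLogConcave f) (x : EuclideanSpace ℝ (Fin n)) :
    ENNReal.ofReal (deltaOut f x) ≤
      ENNReal.ofReal (f 0) * supCorrelation (normalizedDensity f) x := by
  refine ofReal_sSup_le ?_
  rintro _ ⟨x₁, x₂, hx, rfl⟩
  have hhalf := hf.isLogConcave_div.rpow_half_le_openSupportPart_half_smul hf.div_nonneg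
    (div_self hf.map_zero_pos.ne') hf.zero_mem_interior
  have hshift : (1 / 2 : ℝ) • x₁ - x = (1 / 2 : ℝ) • (-x₂) := by rw [hx]; module
  have hsqrt : √(f x₁ * f (-x₂)) = f 0 * (√(f x₁ / f 0) * √(f (-x₂) / f 0)) := by
    rw [← Real.sqrt_mul (hf.div_nonneg x₁), div_mul_div_comm, ← pow_two,
      Real.sqrt_div' _ (sq_nonneg _), Real.sqrt_sq hf.map_zero_pos.le,
      mul_div_cancel₀ _ hf.map_zero_pos.ne']
  have hofReal_sqrt : ∀ y, ENNReal.ofReal √(f y / f 0) = ENNReal.ofReal (f y / f 0) ^ (1 / 2 : ℝ) :=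
    fun y => by
      rw [Real.sqrt_eq_rpow, ENNReal.ofReal_rpow_of_nonneg (hf.div_nonneg y) (by norm_num)]
  rw [hsqrt, ENNReal.ofReal_mul hf.map_zero_pos.le, ENNReal.ofReal_mul (Real.sqrt_nonneg _),
    hofReal_sqrt, hofReal_sqrt]
  gcongr
  refine (mul_le_mul' (hhalf x₁) (hhalf (-x₂))).trans ?_
  rw [← hshift]
  exact le_iSup (fun a => normalizedDensity f a * normalizedDensity f (a - x)) ((1 / 2 : ℝ) • x₁)

theorem ofReal_mul_le_ofReal_deltaIn (hf : IsGeomLogConcave f) (x : EuclideanSpace ℝ (Fin n)) :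
    ENNReal.ofReal (f 0) * (normalizedDensity f x * normalizedDensity f (-x)) ≤
      ENNReal.ofReal (deltaIn f x) := by
  have hle_one := hf.isNormalizedLogConcave_normalizedDensity.le_one
  have hle : ∀ y, ENNReal.ofReal (f 0) * normalizedDensity f y ≤ ENNReal.ofReal (f y) := fun y => by
    calc ENNReal.ofReal (f 0) * normalizedDensity f y
        ≤ ENNReal.ofReal (f 0) * ENNReal.ofReal (f y / f 0) := by
          gcongr
          exact openSupportPart_le _ y
      _ = ENNReal.ofReal (f y) := by
          rw [← ENNReal.ofReal_mul hf.map_zero_pos.le, mul_div_cancel₀ _ hf.map_zero_pos.ne']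
  rw [deltaIn, ENNReal.ofReal_min, le_min_iff]
  exact ⟨(mul_le_mul_right (mul_le_of_le_one_right' (hle_one _)) _).trans (hle x),
    (mul_le_mul_right (mul_le_of_le_one_left' (hle_one _)) _).trans (hle (-x))⟩

theorem setLIntegral_deltaOut_le (hf : IsGeomLogConcave f) {k : ℕ} (hk : 1 ≤ k)
    (H : Submodule ℝ (EuclideanSpace ℝ (Fin n))) (hH : Module.finrank ℝ H = k) :
    ∫⁻ x in (H : Set (EuclideanSpace ℝ (Fin n))), ENNReal.ofReal (deltaOut f x) ∂μH[(k : ℝ)] ≤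
      ENNReal.ofReal ((128 * Real.exp 4 * ((n : ℝ) / k) ^ 2) ^ k) *
        ∫⁻ x in (H : Set (EuclideanSpace ℝ (Fin n))),
          ENNReal.ofReal (deltaIn f x) ∂μH[(k : ℝ)] := by
  have hHaar : (μH[(k : ℝ)] : Measure H).IsAddHaarMeasure := by rw [← hH]; infer_instance
  have hH_nontrivial : Nontrivial H := Module.finrank_pos_iff.1 (hH ▸ hk)
  have hH_meas := H.closed_of_finiteDimensional.measurableSet
  have hmain := hf.isNormalizedLogConcave_normalizedDensity.lintegral_supCorrelation_coe_le
    hf.isCenteredDensity_normalizedDensity H μH[(k : ℝ)]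
  rw [hH, finrank_euclideanSpace_fin] at hmain
  rw [setLIntegral_hausdorffMeasure_eq_lintegral_subtype hH_meas k.cast_nonneg,
    setLIntegral_hausdorffMeasure_eq_lintegral_subtype hH_meas k.cast_nonneg]
  set A := ENNReal.ofReal ((128 * Real.exp 4 * ((n : ℝ) / k) ^ 2) ^ k)
  calc ∫⁻ x : H, ENNReal.ofReal (deltaOut f x) ∂μH[(k : ℝ)]
      ≤ ∫⁻ x : H, ENNReal.ofReal (f 0) * supCorrelation (normalizedDensity f) x ∂μH[(k : ℝ)] :=
        lintegral_mono fun x => hf.ofReal_deltaOut_le x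
    _ = ENNReal.ofReal (f 0) * ∫⁻ x : H, supCorrelation (normalizedDensity f) x ∂μH[(k : ℝ)] :=
        lintegral_const_mul' _ _ ENNReal.ofReal_ne_top
    _ ≤ ENNReal.ofReal (f 0) *
          (A * ∫⁻ x : H, normalizedDensity f x * normalizedDensity f (-x) ∂μH[(k : ℝ)]) := by
        gcongr
    _ = A * ∫⁻ x : H, ENNReal.ofReal (f 0) *
          (normalizedDensity f x * normalizedDensity f (-x)) ∂μH[(k : ℝ)] := by
        rw [lintegral_const_mul' _ _ ENNReal.ofReal_ne_top, mul_left_comm]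
    _ ≤ A * ∫⁻ x : H, ENNReal.ofReal (deltaIn f x) ∂μH[(k : ℝ)] := by
        gcongr with x
        exact hf.ofReal_mul_le_ofReal_deltaIn x

end IsGeomLogConcave

theorem one_le_eight_mul_log_pow_three {n : ℕ} (hn : 2 ≤ n) : 1 ≤ 8 * Real.log n ^ 3 := by
  have hlog : 1 / 2 ≤ Real.log n := by
    have hlog_two := Real.log_le_log two_pos (show (2 : ℝ) ≤ n by exact_mod_cast hn)
    linarith [Real.log_two_gt_d9]
  calc (1 : ℝ) = 8 * (1 / 2) ^ 3 := by norm_num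
    _ ≤ 8 * Real.log n ^ 3 := by gcongr

theorem stmt5_general {n : ℕ} {f : EuclideanSpace ℝ (Fin n) → ℝ} (hf : IsGeomLogConcave f) {k : ℕ}
    (hk : 1 ≤ k) (H : Submodule ℝ (EuclideanSpace ℝ (Fin n))) (hH : Module.finrank ℝ H = k) :
    (∫⁻ x in (H : Set (EuclideanSpace ℝ (Fin n))),
        ENNReal.ofReal (deltaOut f x) ∂μH[(k : ℝ)]) ^ ((k : ℝ)⁻¹) ≤
      ENNReal.ofReal (128 * Real.exp 4 * ((n : ℝ) / k) ^ 2) *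
        (∫⁻ x in (H : Set (EuclideanSpace ℝ (Fin n))),
          ENNReal.ofReal (deltaIn f x) ∂μH[(k : ℝ)]) ^ ((k : ℝ)⁻¹) := by
  refine (ENNReal.rpow_le_rpow (hf.setLIntegral_deltaOut_le hk H hH) (by positivity)).trans_eq ?_
  rw [ENNReal.mul_rpow_of_nonneg _ _ (by positivity),
    ENNReal.ofReal_rpow_of_nonneg (by positivity) (by positivity),
    Real.pow_rpow_inv_natCast (by positivity) (by omega)]

/-- Theorem (functional sections inequality):
`(∫_H Δ_out f)^{1/k} ≤ C·(n/k)²·(log n)³ · (∫_H Δ_in f)^{1/k}` for geometric log-concave `f`,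
where integration over `H` is with respect to `k`-dimensional (Hausdorff) measure. -/
theorem stmt5 :
    ∃ C : ℝ, 1 < C ∧ ∀ (n : ℕ), 2 ≤ n →
      ∀ f : EuclideanSpace ℝ (Fin n) → ℝ, IsGeomLogConcave f →
        ∀ k : ℕ, 1 ≤ k → k ≤ n - 1 →
          ∀ H : Submodule ℝ (EuclideanSpace ℝ (Fin n)), Module.finrank ℝ H = k →
            (∫⁻ x in (H : Set (EuclideanSpace ℝ (Fin n))),
                ENNReal.ofReal (deltaOut f x) ∂μH[(k : ℝ)]) ^ ((k : ℝ)⁻¹) ≤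
              ENNReal.ofReal (C * ((n : ℝ) / k) ^ 2 * (Real.log n) ^ 3) *
                (∫⁻ x in (H : Set (EuclideanSpace ℝ (Fin n))),
                  ENNReal.ofReal (deltaIn f x) ∂μH[(k : ℝ)]) ^ ((k : ℝ)⁻¹) := by
  refine ⟨1024 * Real.exp 4, by linarith [Real.add_one_le_exp (4 : ℝ)], ?_⟩
  intro n hn f hf k hk _ H hH
  refine (stmt5_general hf hk H hH).trans (mul_le_mul' (ENNReal.ofReal_le_ofReal ?_) le_rfl)
  calc 128 * Real.exp 4 * ((n : ℝ) / k) ^ 2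
      ≤ 128 * Real.exp 4 * ((n : ℝ) / k) ^ 2 * (8 * Real.log n ^ 3) :=
        le_mul_of_one_le_right (by positivity) (one_le_eight_mul_log_pow_three hn)
    _ = 1024 * Real.exp 4 * ((n : ℝ) / k) ^ 2 * Real.log n ^ 3 := by ring
end
end

section
/- There is an absolute constant c > 0 with the following property. Let f : ℝ^n → [0,∞) be a geometric log-concave integrable function (n ≥ 2). Then for every 1 ≤ k ≤ n−1 and every k-dimensional linear subspace H of ℝ^n, c·(∫_H f(x) dx)^{1/k} ≤ (∫_H Δ_out f(x) dx)^{1/k}, where the integrals are with respect to k-dimensional Lebesgue measure on H. -/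
open MeasureTheory Metric Set
open scoped ENNReal RealInnerProductSpace Pointwise

noncomputable section

/-!
Since `f` is maximal at the origin, the choice `x₁ = x`, `x₂ = 0` in the supremum defining `Δ_out`
gives `Δ_out f (x / 2) ≥ √(f x · f 0) ≥ f x`. Halving a set scales `d`-dimensional Hausdorff measure
by `2⁻ᵈ`, so integrating over `H = H / 2` and taking `d`-th roots yields the constant `1 / 2`.
-/

section Scaling

theorem smul_coe_submodule {𝕜 E : Type*} [DivisionRing 𝕜] [AddCommGroup E] [Module 𝕜 E]
    {r : 𝕜} (hr : r ≠ 0) (H : Submodule 𝕜 E) : r • (H : Set E) = H := by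
  ext x
  rw [mem_smul_set_iff_inv_smul_mem₀ hr, SetLike.mem_coe, SetLike.mem_coe,
    H.smul_mem_iff (inv_ne_zero hr)]

variable {𝕜 E : Type*} [NormedDivisionRing 𝕜] [NormedAddCommGroup E] [Module 𝕜 E]
  [NormSMulClass 𝕜 E] [MeasurableSpace E] [BorelSpace E] {d : ℝ} {r : 𝕜}

theorem enorm_rpow_smul_map_smul_hausdorffMeasure (hd : 0 ≤ d) (hr : r ≠ 0) :
    ‖r‖ₑ ^ d • (μH[d] : Measure E).map (fun x ↦ r • x) = μH[d] := by
  ext s -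
  have smul_preimage : r • ((fun x ↦ r • x) ⁻¹' s) = s := by
    rw [preimage_smul₀ hr, smul_inv_smul₀ hr]
  calc (‖r‖ₑ ^ d • (μH[d] : Measure E).map (fun x ↦ r • x)) s
      = ‖r‖ₑ ^ d * μH[d] ((fun x ↦ r • x) ⁻¹' s) := by
        rw [Measure.smul_apply, (measurableEmbedding_const_smul₀ hr).map_apply, smul_eq_mul]
    _ = μH[d] (r • ((fun x ↦ r • x) ⁻¹' s)) := by
        rw [Measure.hausdorffMeasure_smul₀ hd hr, ENNReal.smul_def, smul_eq_mul,
          ENNReal.coe_rpow_of_nonneg _ hd, enorm_eq_nnnorm]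
    _ = μH[d] s := by rw [smul_preimage]

theorem setLIntegral_smul_hausdorffMeasure (hd : 0 ≤ d) (hr : r ≠ 0) (g : E → ℝ≥0∞) (S : Set E) :
    ∫⁻ x in r • S, g x ∂μH[d] = ‖r‖ₑ ^ d * ∫⁻ x in S, g (r • x) ∂μH[d] := by
  have preimage_smul_set : (fun x ↦ r • x) ⁻¹' (r • S) = S := by
    rw [preimage_smul₀ hr, inv_smul_smul₀ hr]
  have smul_embedding := measurableEmbedding_const_smul₀ (α := E) hr
  conv_lhs => rw [← enorm_rpow_smul_map_smul_hausdorffMeasure hd hr]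
  rw [Measure.restrict_smul, lintegral_smul_measure, smul_embedding.restrict_map,
    smul_embedding.lintegral_map, preimage_smul_set, smul_eq_mul]

end Scaling

section DeltaOut

variable {n : ℕ} {f : EuclideanSpace ℝ (Fin n) → ℝ}

theorem sqrt_mul_le_deltaOut (hnonneg : ∀ x, 0 ≤ f x) (hbdd : BddAbove (range f))
    (x₁ x₂ : EuclideanSpace ℝ (Fin n)) :
    √(f x₁ * f (-x₂)) ≤ deltaOut f ((2⁻¹ : ℝ) • (x₁ + x₂)) := by
  refine le_csSup ?_ ⟨x₁, x₂, rfl, rfl⟩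
  obtain ⟨M, hM⟩ := hbdd
  have f_le : ∀ x, f x ≤ M := fun x ↦ hM (mem_range_self x)
  refine ⟨√(M * M), ?_⟩
  rintro _ ⟨y₁, y₂, -, rfl⟩
  exact Real.sqrt_le_sqrt
    (mul_le_mul (f_le _) (f_le _) (hnonneg _) ((hnonneg _).trans (f_le y₁)))

theorem le_deltaOut_inv_two_smul (hnonneg : ∀ x, 0 ≤ f x) (hmax : ∀ x, f x ≤ f 0)
    (x : EuclideanSpace ℝ (Fin n)) : f x ≤ deltaOut f ((2⁻¹ : ℝ) • x) := by
  have hbdd : BddAbove (range f) := ⟨f 0, forall_mem_range.2 hmax⟩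
  calc f x ≤ √(f x * f 0) :=
        Real.le_sqrt_of_sq_le <| (sq (f x)).trans_le <|
          mul_le_mul_of_nonneg_left (hmax x) (hnonneg x)
    _ ≤ deltaOut f ((2⁻¹ : ℝ) • x) := by
        simpa only [neg_zero, add_zero] using sqrt_mul_le_deltaOut hnonneg hbdd x 0

theorem stmt6_general (hnonneg : ∀ x, 0 ≤ f x) (hmax : ∀ x, f x ≤ f 0) {d : ℝ} (hd : 0 < d)
    (S : Set (EuclideanSpace ℝ (Fin n))) :
    2⁻¹ * (∫⁻ x in S, ENNReal.ofReal (f x) ∂μH[d]) ^ d⁻¹ ≤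
      (∫⁻ x in (2⁻¹ : ℝ) • S, ENNReal.ofReal (deltaOut f x) ∂μH[d]) ^ d⁻¹ := by
  have enorm_half : ‖(2⁻¹ : ℝ)‖ₑ = 2⁻¹ := by
    rw [Real.enorm_eq_ofReal (by positivity), ENNReal.ofReal_inv_of_pos two_pos,
      ENNReal.ofReal_ofNat]
  calc 2⁻¹ * (∫⁻ x in S, ENNReal.ofReal (f x) ∂μH[d]) ^ d⁻¹
      = (2⁻¹ ^ d * ∫⁻ x in S, ENNReal.ofReal (f x) ∂μH[d]) ^ d⁻¹ := by
        rw [ENNReal.mul_rpow_of_nonneg _ _ (inv_nonneg.2 hd.le), ENNReal.rpow_rpow_inv hd.ne']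
    _ ≤ (2⁻¹ ^ d * ∫⁻ x in S, ENNReal.ofReal (deltaOut f ((2⁻¹ : ℝ) • x)) ∂μH[d]) ^ d⁻¹ := by
        gcongr with x
        exact le_deltaOut_inv_two_smul hnonneg hmax x
    _ = (∫⁻ x in (2⁻¹ : ℝ) • S, ENNReal.ofReal (deltaOut f x) ∂μH[d]) ^ d⁻¹ := by
        rw [setLIntegral_smul_hausdorffMeasure hd.le (inv_ne_zero two_ne_zero), enorm_half]

end DeltaOut

/-- Theorem (functional lower bound):
`c·(∫_H f)^{1/k} ≤ (∫_H Δ_out f)^{1/k}` for geometric log-concave `f`. -/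
theorem stmt6 :
    ∃ c : ℝ, 0 < c ∧ ∀ (n : ℕ), 2 ≤ n →
      ∀ f : EuclideanSpace ℝ (Fin n) → ℝ, IsGeomLogConcave f →
        ∀ k : ℕ, 1 ≤ k → k ≤ n - 1 →
          ∀ H : Submodule ℝ (EuclideanSpace ℝ (Fin n)), Module.finrank ℝ H = k →
            ENNReal.ofReal c *
                (∫⁻ x in (H : Set (EuclideanSpace ℝ (Fin n))),
                  ENNReal.ofReal (f x) ∂μH[(k : ℝ)]) ^ ((k : ℝ)⁻¹) ≤
              (∫⁻ x in (H : Set (EuclideanSpace ℝ (Fin n))),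
                ENNReal.ofReal (deltaOut f x) ∂μH[(k : ℝ)]) ^ ((k : ℝ)⁻¹) := by
  refine ⟨2⁻¹, by norm_num, fun n _ f hf k hk _ H _ ↦ ?_⟩
  have half_smul_H := smul_coe_submodule (inv_ne_zero (two_ne_zero (α := ℝ))) H
  simpa only [half_smul_H, ENNReal.ofReal_inv_of_pos two_pos, ENNReal.ofReal_ofNat] using
    stmt6_general hf.nonneg hf.maxAtZero (Nat.cast_pos.2 hk) H
end
end
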